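/- Define C_n(0) := −γ_n + Σ_{k=0}^n (n−k)! γ_k c_{2n−2k+1} for n ≥ 0. Then for every integer N ≥ 0, as the positive integer m → ∞, e^{−m} Σ_{k=0}^{m−1} m^k/k! = 1/2 + (1/√(2πm)) ( Σ_{n=0}^{N−1} C_n(0) m^{−n} + O(m^{−N}) ); in particular C_0(0) = −1/3, C_1(0) = −1/540, C_2(0) = 25/6048, C_3(0) = 101/155520. -/

import Mathlib

open Finset

/-- The unsigned Stirling numbers of the first kind. -/
def stirling1 : ℕ → ℕ → ℕ
  | 0, 0 => 1
  | 0, _ + 1 => 0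
  | _ + 1, 0 => 0
  | n + 1, j + 1 => stirling1 n j + n * stirling1 n (j + 1)

/-- Generalized binomial coefficient `C(ρ, k) = ρ(ρ-1)⋯(ρ-k+1)/k!` for real `ρ`. -/
noncomputable def gbinomR (ρ : ℝ) (k : ℕ) : ℝ :=
  (∏ i ∈ Finset.range k, (ρ - i)) / (Nat.factorial k : ℝ)

/-- The formal power series `F(x) = 2(x - log(1+x))/x² = ∑_{m≥0} 2(-1)^m x^m/(m+2)`. -/
noncomputable def F : PowerSeries ℝ :=
  PowerSeries.mk fun m => 2 * (-1 : ℝ) ^ m / ((m : ℝ) + 2)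

/-- For real `ρ`, the formal power series `F^ρ := ∑_{k≥0} C(ρ,k) (F-1)^k`; since `F - 1`
has zero constant term, the coefficient of `x^n` only involves `k ≤ n`. -/
noncomputable def Fpow (ρ : ℝ) : PowerSeries ℝ :=
  PowerSeries.mk fun n =>
    ∑ k ∈ Finset.range (n + 1), gbinomR ρ k * PowerSeries.coeff (R := ℝ) n ((F - 1) ^ k)

/-- The `n`-th Stirling coefficient:
`γ_n = ((-1)^n (2n)!/(2^n n!)) · [x^{2n}] F^{-(n+1/2)}`. -/
noncomputable def stirlingCoeff (n : ℕ) : ℝ :=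
  ((-1 : ℝ) ^ n * (Nat.factorial (2 * n) : ℝ) / (2 ^ n * (Nat.factorial n : ℝ))) *
    PowerSeries.coeff (R := ℝ) (2 * n) (Fpow (-((n : ℝ) + 1 / 2)))
/-- Partial ordinary Bell polynomials: `obell f n k` is the coefficient of `x^n` in
`(∑_{m ≥ 1} f m * x^m)^k`, i.e. `B_{n,k}(f₁, …, f_{n-k+1})`. -/
noncomputable def obell (f : ℕ → ℝ) (n k : ℕ) : ℝ :=
  PowerSeries.coeff (R := ℝ) n ((PowerSeries.mk fun m => if m = 0 then 0 else f m) ^ k)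

/-- The coefficients of the asymptotic expansion of `∫_0^∞ e^{-λ(x - log(1+x))} dx`:
`c_n = (1/(2Γ((n+1)/2))) ∑_{k=0}^n ((-1)^k 2^{(n+1)/2+k}/k!) Γ((n+1)/2+k)
B_{n,k}(a₁,…,a_{n-k+1})` with `a_m = (-1)^m/(m+2)`. -/
noncomputable def laplaceCoeff (n : ℕ) : ℝ :=
  (1 / (2 * Real.Gamma (((n : ℝ) + 1) / 2))) *
    ∑ k ∈ Finset.range (n + 1),
      ((-1 : ℝ) ^ k * (2 : ℝ) ^ (((n : ℝ) + 1) / 2 + k) / (Nat.factorial k : ℝ)) *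
        Real.Gamma (((n : ℝ) + 1) / 2 + k) *
        obell (fun m => (-1 : ℝ) ^ m / ((m : ℝ) + 2)) n k

open Asymptotics Filter

/-- The coefficients `C_n(0) = -γ_n + ∑_{k=0}^n (n-k)! γ_k c_{2n-2k+1}` in the asymptotic
expansion of `Γ(m,m)/Γ(m)`. -/
noncomputable def C₀ (n : ℕ) : ℝ :=
  -stirlingCoeff n +
    ∑ k ∈ Finset.range (n + 1),
      (Nat.factorial (n - k) : ℝ) * stirlingCoeff k * laplaceCoeff (2 * n - 2 * k + 1)

open MeasureTheory

/-- Coefficients of powers of `F - 1`. -/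
noncomputable def bco (n k : ℕ) : ℝ := PowerSeries.coeff (R := ℝ) n ((F - 1) ^ k)

/-- The phase remainder. -/
noncomputable def hfun (x : ℂ) : ℂ := 2 * (x - Complex.log (1 + x)) / x ^ 2 - 1

lemma coeff_Fsub (n : ℕ) : PowerSeries.coeff (R := ℝ) n (F - 1) =
    if n = 0 then 0 else 2 * (-1 : ℝ) ^ n / ((n : ℝ) + 2) := by
  rcases n with _ | n
  · simp [F]
  · simp [F, PowerSeries.coeff_one]

lemma bco_zero_of_lt {n k : ℕ} (h : n < k) : bco n k = 0 := by
  unfold bco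
  apply PowerSeries.coeff_of_lt_order
  have h1 : (1 : ℕ∞) ≤ (F - 1).order := by
    apply PowerSeries.le_order
    intro i hi
    have : i = 0 := by
      have : i < 1 := by exact_mod_cast hi
      omega
    subst this
    rw [coeff_Fsub]; simp
  have h2 : (k : ℕ∞) ≤ ((F - 1) ^ k).order := by
    calc (k : ℕ∞) = k • (1 : ℕ∞) := by simp
      _ ≤ k • (F - 1).order := by gcongr
      _ ≤ _ := PowerSeries.le_order_pow _ _
  exact lt_of_lt_of_le (by exact_mod_cast h) h2

lemma obell_eq (n k : ℕ) :
    obell (fun m => (-1 : ℝ) ^ m / ((m : ℝ) + 2)) n k = bco n k / 2 ^ k := by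
  unfold obell bco
  have : (PowerSeries.mk fun m => if m = 0 then 0 else (-1 : ℝ) ^ m / ((m : ℝ) + 2)) =
      PowerSeries.C (1 / 2 : ℝ) * (F - 1) := by
    ext m
    rw [PowerSeries.coeff_C_mul, coeff_Fsub, PowerSeries.coeff_mk]
    split_ifs <;> ring
  rw [this, mul_pow, ← map_pow, PowerSeries.coeff_C_mul, one_div, inv_pow]
  field_simp

/-- `f` has the Taylor expansion `P` at `0` (punctured). -/
def TayExp (f : ℂ → ℂ) (P : PowerSeries ℝ) : Prop :=
  ∀ K : ℕ, ∃ C : ℝ, 0 ≤ C ∧ ∀ x : ℂ, ‖x‖ ≤ 1 / 2 → x ≠ 0 →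
    ‖f x - ∑ n ∈ Finset.range K, ((PowerSeries.coeff (R := ℝ) n P : ℝ) : ℂ) * x ^ n‖ ≤ C * ‖x‖ ^ K

lemma poly_bound (p : Polynomial ℂ) (K : ℕ) (h : ∀ d < K, p.coeff d = 0) :
    ∃ C : ℝ, 0 ≤ C ∧ ∀ x : ℂ, ‖x‖ ≤ 1 / 2 → ‖p.eval x‖ ≤ C * ‖x‖ ^ K := by
  obtain ⟨q, rfl⟩ := Polynomial.X_pow_dvd_iff.2 h
  obtain ⟨C, hC⟩ := (isCompact_closedBall (0 : ℂ) (1 / 2)).exists_bound_of_continuousOn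
    (f := fun x => q.eval x) q.continuous.continuousOn
  refine ⟨max C 0, le_max_right _ _, fun x hx => ?_⟩
  have := hC x (by simpa using hx)
  rw [Polynomial.eval_mul, norm_mul, Polynomial.eval_pow, Polynomial.eval_X, norm_pow, mul_comm]
  gcongr
  exact this.trans (le_max_left _ _)

/-- truncation as complex polynomial -/
noncomputable def trC (K : ℕ) (P : PowerSeries ℝ) : Polynomial ℂ :=
  (PowerSeries.trunc K P).map (algebraMap ℝ ℂ)

lemma trC_eval (K : ℕ) (P : PowerSeries ℝ) (x : ℂ) :
    (trC K P).eval x =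
      ∑ n ∈ Finset.range K, ((PowerSeries.coeff (R := ℝ) n P : ℝ) : ℂ) * x ^ n := by
  unfold trC
  rw [Polynomial.eval_map, PowerSeries.eval₂_trunc_eq_sum_range]
  rfl

lemma TayExp.mul {f g : ℂ → ℂ} {P Q : PowerSeries ℝ} (hf : TayExp f P) (hg : TayExp g Q) :
    TayExp (fun x => f x * g x) (P * Q) := by
  intro K
  obtain ⟨C1, hC1, h1⟩ := hf K
  obtain ⟨C2, hC2, h2⟩ := hg K
  obtain ⟨D1, hD1, k1⟩ := poly_bound (trC K P) 0 (by simp)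
  obtain ⟨D2, hD2, k2⟩ := hg 0
  obtain ⟨C3, hC3, h3⟩ := poly_bound (trC K P * trC K Q - trC K (P * Q)) K (by
    intro d hd
    unfold trC
    rw [← Polynomial.map_mul, ← Polynomial.map_sub, Polynomial.coeff_map, Polynomial.coeff_sub,
      PowerSeries.coeff_trunc, if_pos hd, PowerSeries.coeff_mul, Polynomial.coeff_mul]
    rw [map_eq_zero, sub_eq_zero]
    apply Finset.sum_congr rfl
    intro ij hij
    have := HasAntidiagonal.mem_antidiagonal.1 hij
    rw [PowerSeries.coeff_trunc, PowerSeries.coeff_trunc, if_pos (by omega), if_pos (by omega)])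
  refine ⟨C1 * D2 + D1 * C2 + C3, by positivity, fun x hx hx0 => ?_⟩
  have a1 := h1 x hx hx0
  have a2 := h2 x hx hx0
  have a3 := h3 x hx
  have a4 := k1 x hx
  have a5 := k2 x hx hx0
  simp only [pow_zero, mul_one, Finset.range_zero, Finset.sum_empty, sub_zero] at a4 a5
  rw [← trC_eval] at a1 a2 ⊢
  rw [Polynomial.eval_sub, Polynomial.eval_mul] at a3
  have : f x * g x - (trC K (P * Q)).eval x = (f x - (trC K P).eval x) * g x +
    (trC K P).eval x * (g x - (trC K Q).eval x) +
    ((trC K P).eval x * (trC K Q).eval x - (trC K (P * Q)).eval x) := by ring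
  rw [this]
  refine (norm_add₃_le).trans ?_
  rw [norm_mul, norm_mul]
  have b1 : ‖f x - (trC K P).eval x‖ * ‖g x‖ ≤ (C1 * ‖x‖ ^ K) * D2 := by gcongr
  have b2 : ‖(trC K P).eval x‖ * ‖g x - (trC K Q).eval x‖ ≤ D1 * (C2 * ‖x‖ ^ K) := by gcongr
  linarith

lemma TayExp.one : TayExp (fun _ => 1) 1 := by
  intro K
  rcases K with _ | K
  · exact ⟨1, by norm_num, by simp⟩
  · refine ⟨0, le_rfl, fun x _ _ => ?_⟩
    rw [Finset.sum_range_succ']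
    simp [PowerSeries.coeff_one]

lemma TayExp.pow {f : ℂ → ℂ} {P : PowerSeries ℝ} (hf : TayExp f P) (k : ℕ) :
    TayExp (fun x => f x ^ k) (P ^ k) := by
  induction k with
  | zero => simpa using TayExp.one
  | succ k ih => simpa [pow_succ] using ih.mul hf

lemma hfun_norm_sum (K : ℕ) (x : ℂ) (hx : ‖x‖ ≤ 1 / 2) (hx0 : x ≠ 0) :
    ‖hfun x - ∑ n ∈ Finset.range (K + 1),
      ((PowerSeries.coeff (R := ℝ) n (F - 1) : ℝ) : ℂ) * x ^ n‖ ≤ 4 / (K + 3) * ‖x‖ ^ (K + 1) := by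
  have h := Complex.norm_log_sub_logTaylor_le (K + 2) (z := x) (by linarith)
  have key : hfun x - ∑ n ∈ Finset.range (K + 1),
      ((PowerSeries.coeff (R := ℝ) n (F - 1) : ℝ) : ℂ) * x ^ n =
      -2 / x ^ 2 * (Complex.log (1 + x) - Complex.logTaylor (K + 2 + 1) x) := by
    unfold hfun Complex.logTaylor
    rw [Finset.sum_range_succ' _ (K + 2), Finset.sum_range_succ' _ (K + 1),
      Finset.sum_range_succ' _ K, Finset.sum_range_succ' _ K]
    simp only [coeff_Fsub]
    have : ∀ n ∈ Finset.range K, (((if n + 1 = 0 then (0 : ℝ) else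
        2 * (-1 : ℝ) ^ (n + 1) / (((n + 1 : ℕ) : ℝ) + 2) : ℝ)) : ℂ) * x ^ (n + 1) =
        -2 / x ^ 2 * ((-1) ^ (n + 1 + 1 + 1 + 1) * x ^ (n + 1 + 1 + 1) / ((n + 1 + 1 + 1 : ℕ) : ℂ)) := by
      intro n _
      rw [if_neg (by omega)]
      push_cast
      have : (n : ℂ) + 1 + 2 ≠ 0 := by
        have : ((n + 3 : ℕ) : ℂ) ≠ 0 := Nat.cast_ne_zero.2 (by omega)
        push_cast at this
        convert this using 1; ring
      have h2 : (n : ℂ) + 1 + 1 + 1 = n + 1 + 2 := by ring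
      rw [h2]
      field_simp
      ring
    rw [Finset.sum_congr rfl this, ← Finset.mul_sum]
    simp
    field_simp
    ring
  rw [key, norm_mul, norm_div, norm_pow, norm_neg]
  have hxp : 0 < ‖x‖ := norm_pos_iff.2 hx0
  have h3 : (1 - ‖x‖)⁻¹ ≤ 2 := by
    rw [inv_le_comm₀ (by linarith) (by norm_num)]; linarith
  calc ‖(2 : ℂ)‖ / ‖x‖ ^ 2 * ‖Complex.log (1 + x) - Complex.logTaylor (K + 2 + 1) x‖
      ≤ 2 / ‖x‖ ^ 2 * (‖x‖ ^ (K + 2 + 1) * (1 - ‖x‖)⁻¹ / ((K + 2 : ℕ) + 1)) := by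
        rw [Complex.norm_two]; gcongr
    _ ≤ 2 / ‖x‖ ^ 2 * (‖x‖ ^ (K + 2 + 1) * 2 / ((K + 2 : ℕ) + 1)) := by gcongr
    _ = _ := by push_cast; field_simp; ring

lemma hfun_norm (x : ℂ) (hx : ‖x‖ ≤ 1 / 2) (hx0 : x ≠ 0) : ‖hfun x‖ ≤ 4 / 3 * ‖x‖ := by
  have := hfun_norm_sum 0 x hx hx0
  simpa [coeff_Fsub] using this

lemma hfun_tay : TayExp hfun (F - 1) := by
  intro K
  rcases K with _ | K
  · refine ⟨4 / 3 * (1 / 2), by norm_num, fun x hx hx0 => ?_⟩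
    have := hfun_norm x hx hx0
    simp only [Finset.range_zero, Finset.sum_empty, sub_zero, pow_zero, mul_one]
    linarith
  · exact ⟨4 / (K + 3), by positivity, hfun_norm_sum K⟩

lemma hpow_bound (k K : ℕ) : ∃ C : ℝ, 0 ≤ C ∧ ∀ x : ℂ, ‖x‖ ≤ 1 / 2 → x ≠ 0 →
    ‖hfun x ^ k - ∑ n ∈ Finset.range K, (bco n k : ℂ) * x ^ n‖ ≤ C * ‖x‖ ^ K :=
  hfun_tay.pow k K

lemma one_add_eq_exp (x : ℂ) (hx : ‖x‖ < 1) (hx0 : x ≠ 0) :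
    1 + x = Complex.exp (x - x ^ 2 / 2 * (1 + hfun x)) := by
  have h1 : x - x ^ 2 / 2 * (1 + hfun x) = Complex.log (1 + x) := by
    unfold hfun; field_simp; ring
  rw [h1, Complex.exp_log]
  intro h
  have : x = -1 := by linear_combination h
  rw [this] at hx; simp at hx

lemma gauss_integrable (j : ℕ) {b : ℝ} (hb : 0 < b) :
    IntegrableOn (fun s : ℝ => s ^ j * Real.exp (-(b * s ^ 2))) (Set.Ioi 0) := by
  have h := integrableOn_rpow_mul_exp_neg_mul_rpow (p := 2) (s := j) (b := b)
    (by have : (0 : ℝ) ≤ j := by positivity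
        linarith) (by norm_num) hb
  refine h.congr_fun (fun s _ => ?_) measurableSet_Ioi
  simp only [Real.rpow_natCast]
  norm_cast
  rw [neg_mul]

lemma gauss_integral (j : ℕ) {b : ℝ} (hb : 0 < b) :
    ∫ s : ℝ in Set.Ioi 0, s ^ j * Real.exp (-(b * s ^ 2)) =
      b ^ (-(((j : ℝ) + 1) / 2)) * (1 / 2) * Real.Gamma (((j : ℝ) + 1) / 2) := by
  have h := integral_rpow_mul_exp_neg_mul_rpow (p := 2) (q := j) (b := b) (by norm_num)
    (by have : (0 : ℝ) ≤ j := by positivity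
        linarith) hb
  rw [neg_div] at h
  rw [← h]
  refine setIntegral_congr_fun measurableSet_Ioi (fun s _ => ?_)
  simp only [Real.rpow_natCast]
  norm_cast
  rw [neg_mul]

/-- `Γ((n+1)/2) c_n`. -/
noncomputable def Aco (n : ℕ) : ℝ := Real.Gamma (((n : ℝ) + 1) / 2) * laplaceCoeff n

lemma Aco_eq (n K : ℕ) (h : n < K) : Aco n = ∑ k ∈ Finset.range K,
    (1 / 2) * ((-1 : ℝ) ^ k * (2 : ℝ) ^ (((n : ℝ) + 1) / 2) / (Nat.factorial k : ℝ)) *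
        Real.Gamma (((n : ℝ) + 1) / 2 + k) * bco n k := by
  have hG : Real.Gamma (((n : ℝ) + 1) / 2) ≠ 0 := (Real.Gamma_pos_of_pos (by positivity)).ne'
  unfold Aco laplaceCoeff
  rw [← mul_assoc]
  have : Real.Gamma (((n : ℝ) + 1) / 2) * (1 / (2 * Real.Gamma (((n : ℝ) + 1) / 2))) = 1 / 2 := by
    field_simp
  rw [this, Finset.mul_sum]
  have hsub : Finset.range (n + 1) ⊆ Finset.range K := by
    intro i hi
    simp at hi ⊢; omega
  rw [← Finset.sum_subset hsub]
  · apply Finset.sum_congr rfl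
    intro k _
    rw [obell_eq, Real.rpow_add (by norm_num), Real.rpow_natCast]
    field_simp
  · intro k _ hk
    rw [bco_zero_of_lt (by simp at hk; omega)]
    simp

/-- The approximating integrand. -/
noncomputable def Eterm (ω : ℂ) (m : ℕ) (k n : ℕ) (s : ℝ) : ℂ :=
  ((-((m : ℂ) * s ^ 2 / 2)) ^ k / (Nat.factorial k : ℂ) * (bco n k : ℂ) * (ω * s) ^ n) *
    Complex.exp (-((m : ℂ) * s ^ 2 / 2))

lemma Eterm_eq (ω : ℂ) (m : ℕ) (k n : ℕ) (s : ℝ) : Eterm ω m k n s =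
    ((-(m : ℂ) / 2) ^ k / (Nat.factorial k : ℂ) * (bco n k : ℂ) * ω ^ n) *
      ((s ^ (2 * k + n) * Real.exp (-((m : ℝ) / 2 * s ^ 2)) : ℝ) : ℂ) := by
  unfold Eterm
  push_cast
  have : -((m : ℂ) / 2 * s ^ 2) = -((m : ℂ) * s ^ 2 / 2) := by ring
  rw [this, pow_add, pow_mul]
  have h2 : -((m : ℂ) * s ^ 2 / 2) = (-(m : ℂ) / 2) * s ^ 2 := by ring
  rw [show (-((m : ℂ) * s ^ 2 / 2)) ^ k = (-(m : ℂ) / 2) ^ k * ((s : ℂ) ^ 2) ^ k by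
    rw [h2, mul_pow], mul_pow]
  ring

lemma Eterm_integrable (ω : ℂ) (m : ℕ) (hm : 0 < m) (k n : ℕ) :
    IntegrableOn (Eterm ω m k n) (Set.Ioi 0) := by
  have hm' : (0 : ℝ) < (m : ℝ) / 2 := by positivity
  have := ((gauss_integrable (2 * k + n) hm').ofReal (𝕜 := ℂ)).const_mul
    ((-(m : ℂ) / 2) ^ k / (Nat.factorial k : ℂ) * (bco n k : ℂ) * ω ^ n)
  refine this.congr (Filter.Eventually.of_forall fun s => ?_)
  exact (Eterm_eq ω m k n s).symm

lemma Eterm_integral (ω : ℂ) (m : ℕ) (hm : 0 < m) (k n : ℕ) :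
    ∫ s in Set.Ioi 0, Eterm ω m k n s =
      ω ^ n * (((m : ℝ) ^ (-(((n : ℝ) + 1) / 2)) *
      ((1 / 2) * ((-1 : ℝ) ^ k * (2 : ℝ) ^ (((n : ℝ) + 1) / 2) / (Nat.factorial k : ℝ)) *
        Real.Gamma (((n : ℝ) + 1) / 2 + k) * bco n k) : ℝ) : ℂ) := by
  have hm0 : (0 : ℝ) < m := by exact_mod_cast hm
  have hm' : (0 : ℝ) < (m : ℝ) / 2 := by positivity
  simp_rw [Eterm_eq]
  rw [integral_const_mul, integral_complex_ofReal, gauss_integral _ hm']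
  have e1 : ((2 * k + n : ℕ) : ℝ) = 2 * k + n := by push_cast; ring
  have e2 : (((2 * k + n : ℕ) : ℝ) + 1) / 2 = ((n : ℝ) + 1) / 2 + k := by rw [e1]; ring
  rw [e2]
  have e3 : ((m : ℝ) / 2) ^ (-(((n : ℝ) + 1) / 2 + k)) =
      (m : ℝ) ^ (-(((n : ℝ) + 1) / 2)) * (2 : ℝ) ^ (((n : ℝ) + 1) / 2) * (((m : ℝ) / 2) ^ k)⁻¹ := by
    rw [neg_add, Real.rpow_add hm', Real.rpow_neg hm'.le (k : ℝ), Real.rpow_natCast,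
      Real.div_rpow hm0.le (by norm_num), Real.rpow_neg (by norm_num : (0 : ℝ) ≤ 2)]
    field_simp
  rw [e3]
  have e4 : ((-(m : ℂ) / 2) ^ k / (Nat.factorial k : ℂ) * (bco n k : ℂ) * ω ^ n) =
      ω ^ n * (((-1 : ℝ) ^ k * ((m : ℝ) / 2) ^ k / (Nat.factorial k : ℝ) * bco n k : ℝ) : ℂ) := by
    push_cast
    rw [← mul_pow]
    ring
  rw [e4, mul_assoc, ← Complex.ofReal_mul]
  congr 2
  have : ((m : ℝ) / 2) ^ k ≠ 0 := by positivity
  field_simp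

/-- The total approximating integrand. -/
noncomputable def Efun (K : ℕ) (ω : ℂ) (m : ℕ) (s : ℝ) : ℂ :=
  ∑ k ∈ Finset.range K, ∑ n ∈ Finset.range K, Eterm ω m k n s

lemma Efun_integrable (K : ℕ) (ω : ℂ) (m : ℕ) (hm : 0 < m) :
    IntegrableOn (Efun K ω m) (Set.Ioi 0) := by
  unfold Efun
  exact integrable_finsetSum _ fun k _ => integrable_finsetSum _ fun n _ =>
    Eterm_integrable ω m hm k n

lemma Efun_integral (K : ℕ) (ω : ℂ) (m : ℕ) (hm : 0 < m) :
    ∫ s in Set.Ioi 0, Efun K ω m s =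
      ∑ n ∈ Finset.range K, ω ^ n * ((Aco n * (m : ℝ) ^ (-(((n : ℝ) + 1) / 2)) : ℝ) : ℂ) := by
  unfold Efun
  rw [integral_finsetSum _ (fun k _ => integrable_finsetSum _ fun n _ =>
    Eterm_integrable ω m hm k n)]
  simp_rw [integral_finsetSum _ (fun n _ => Eterm_integrable ω m hm _ n),
    Eterm_integral ω m hm]
  rw [Finset.sum_comm]
  apply Finset.sum_congr rfl
  intro n hn
  rw [← Finset.mul_sum, ← Complex.ofReal_sum, ← Finset.mul_sum,
    ← Aco_eq n K (Finset.mem_range.1 hn), mul_comm (Aco n)]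

/-- The majorant. -/
noncomputable def Mterm (K m k : ℕ) (s : ℝ) : ℝ :=
  ((m : ℝ) * s ^ 2) ^ k * s ^ K * Real.exp (-((m : ℝ) * s ^ 2 / 4))

lemma Mterm_eq (K m k : ℕ) (s : ℝ) : Mterm K m k s =
    (m : ℝ) ^ k * (s ^ (2 * k + K) * Real.exp (-((m : ℝ) / 4 * s ^ 2))) := by
  unfold Mterm
  rw [mul_pow, pow_add, pow_mul]
  have : (m : ℝ) * s ^ 2 / 4 = (m : ℝ) / 4 * s ^ 2 := by ring
  rw [this]; ring

lemma Mterm_integrable (K m k : ℕ) (hm : 0 < m) :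
    IntegrableOn (Mterm K m k) (Set.Ioi 0) := by
  have hm' : (0 : ℝ) < (m : ℝ) / 4 := by positivity
  refine ((gauss_integrable (2 * k + K) hm').const_mul ((m : ℝ) ^ k)).congr
    (Filter.Eventually.of_forall fun s => ?_)
  exact (Mterm_eq K m k s).symm

lemma Mterm_integral (K k : ℕ) : ∃ C : ℝ, 0 ≤ C ∧ ∀ m : ℕ, 0 < m →
    ∫ s in Set.Ioi 0, Mterm K m k s = C * (m : ℝ) ^ (-(((K : ℝ) + 1) / 2)) := by
  have hG : 0 < Real.Gamma (((K : ℝ) + 1) / 2 + k) := Real.Gamma_pos_of_pos (by positivity)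
  refine ⟨(4 : ℝ) ^ (((K : ℝ) + 1) / 2) * 4 ^ k * (1 / 2) * Real.Gamma (((K : ℝ) + 1) / 2 + k),
    by positivity, fun m hm => ?_⟩
  have hm0 : (0 : ℝ) < m := by exact_mod_cast hm
  have hm' : (0 : ℝ) < (m : ℝ) / 4 := by positivity
  simp_rw [Mterm_eq]
  rw [integral_const_mul, gauss_integral _ hm']
  have e1 : ((2 * k + K : ℕ) : ℝ) = 2 * k + K := by push_cast; ring
  have e2 : (((2 * k + K : ℕ) : ℝ) + 1) / 2 = ((K : ℝ) + 1) / 2 + k := by rw [e1]; ring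
  rw [e2]
  have e3 : ((m : ℝ) / 4) ^ (-(((K : ℝ) + 1) / 2 + k)) =
      (m : ℝ) ^ (-(((K : ℝ) + 1) / 2)) * (4 : ℝ) ^ (((K : ℝ) + 1) / 2) * (((m : ℝ) / 4) ^ k)⁻¹ := by
    rw [neg_add, Real.rpow_add hm', Real.rpow_neg hm'.le (k : ℝ), Real.rpow_natCast,
      Real.div_rpow hm0.le (by norm_num), Real.rpow_neg (by norm_num : (0 : ℝ) ≤ 4)]
    field_simp
  rw [e3]
  have : (m : ℝ) ^ k = (m / 4 : ℝ) ^ k * 4 ^ k := by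
    rw [← mul_pow, div_mul_cancel₀ _ (by norm_num)]
  have h0 : (m / 4 : ℝ) ^ k ≠ 0 := by positivity
  rw [this]
  field_simp

lemma local_bound (K : ℕ) : ∃ B : ℝ, 0 ≤ B ∧ ∀ (ω : ℂ), ‖ω‖ = 1 → ∀ (m : ℕ) (s : ℝ), 0 < s →
    s ≤ 1 / 4 → ‖Complex.exp (-((s : ℂ) ^ 2 / 2 * (1 + hfun (ω * s)))) ^ m - Efun K ω m s‖ ≤
      B * ∑ k ∈ Finset.range (K + 1), Mterm K m k s := by
  choose C hC0 hC using fun k => hpow_bound k K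
  refine ⟨1 + ∑ k ∈ Finset.range K, C k, by
    have := Finset.sum_nonneg (fun k (_ : k ∈ Finset.range K) => hC0 k)
    linarith, fun ω hω m s hs hs4 => ?_⟩
  have hx : ‖ω * s‖ = s := by
    rw [norm_mul, hω, one_mul, Complex.norm_real, Real.norm_of_nonneg hs.le]
  have hx0 : ω * s ≠ 0 := by rw [← norm_pos_iff, hx]; exact hs
  have hx2 : ‖ω * s‖ ≤ 1 / 2 := by rw [hx]; linarith
  set h := hfun (ω * s) with hh
  have hh1 : ‖h‖ ≤ 4 / 3 * s := by rw [← hx]; exact hfun_norm _ hx2 hx0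
  set a : ℝ := (m : ℝ) * s ^ 2 / 2 with ha
  have ha0 : 0 ≤ a := by positivity
  have hac : (m : ℂ) * (s : ℂ) ^ 2 / 2 = (a : ℂ) := by rw [ha]; push_cast; ring
  have key : Complex.exp (-((s : ℂ) ^ 2 / 2 * (1 + h))) ^ m - Efun K ω m s =
      Complex.exp (-(a : ℂ)) * ((Complex.exp (-(a : ℂ) * h) -
        ∑ k ∈ Finset.range K, (-(a : ℂ) * h) ^ k / (Nat.factorial k : ℂ)) +
        ∑ k ∈ Finset.range K, (-(a : ℂ)) ^ k / (Nat.factorial k : ℂ) *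
          (h ^ k - ∑ n ∈ Finset.range K, (bco n k : ℂ) * (ω * s) ^ n)) := by
    have e1 : Complex.exp (-((s : ℂ) ^ 2 / 2 * (1 + h))) ^ m =
        Complex.exp (-(a : ℂ)) * Complex.exp (-(a : ℂ) * h) := by
      rw [← Complex.exp_nat_mul, ← Complex.exp_add, ← hac]
      congr 1; ring
    have e2 : Efun K ω m s = Complex.exp (-(a : ℂ)) *
        ∑ k ∈ Finset.range K, (-(a : ℂ)) ^ k / (Nat.factorial k : ℂ) *
          ∑ n ∈ Finset.range K, (bco n k : ℂ) * (ω * s) ^ n := by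
      unfold Efun Eterm
      rw [hac, Finset.mul_sum]
      apply Finset.sum_congr rfl; intro k _
      rw [Finset.mul_sum, Finset.mul_sum]
      apply Finset.sum_congr rfl; intro n _
      ring
    rw [e1, e2]
    simp_rw [mul_sub, Finset.sum_sub_distrib, mul_pow, mul_add, mul_sub]
    have : ∀ k, (-(a : ℂ)) ^ k * h ^ k / (Nat.factorial k : ℂ) =
      (-(a : ℂ)) ^ k / (Nat.factorial k : ℂ) * h ^ k := fun k => by ring
    simp_rw [this]
    ring
  rw [key, norm_mul]
  have hexp : ‖Complex.exp (-(a : ℂ))‖ = Real.exp (-a) := by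
    rw [← Complex.ofReal_neg, Complex.norm_exp_ofReal]
  rw [hexp]
  have hz : ‖-(a : ℂ) * h‖ ≤ a * (4 / 3 * s) := by
    rw [norm_mul, norm_neg, Complex.norm_real, Real.norm_of_nonneg ha0]; gcongr
  have hz2 : ‖-(a : ℂ) * h‖ ≤ a / 2 := hz.trans (by nlinarith)
  have hz3 : ‖-(a : ℂ) * h‖ ≤ (m : ℝ) * s ^ 2 * s := hz.trans (by
    rw [ha]
    have : 0 ≤ (m : ℝ) * s ^ 2 * s := by positivity
    nlinarith)
  have b1 : Real.exp (-a) * ‖Complex.exp (-(a : ℂ) * h) -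
        ∑ k ∈ Finset.range K, (-(a : ℂ) * h) ^ k / (Nat.factorial k : ℂ)‖ ≤ Mterm K m K s := by
    calc _ ≤ Real.exp (-a) * (‖-(a : ℂ) * h‖ ^ K * Real.exp ‖-(a : ℂ) * h‖) := by
          gcongr
          exact Complex.norm_exp_sub_sum_le_norm_mul_exp _ _
      _ ≤ Real.exp (-a) * (((m : ℝ) * s ^ 2 * s) ^ K * Real.exp (a / 2)) := by gcongr
      _ = ((m : ℝ) * s ^ 2) ^ K * s ^ K * (Real.exp (-a) * Real.exp (a / 2)) := by
          rw [mul_pow _ s]; ring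
      _ = _ := by
          rw [← Real.exp_add]
          unfold Mterm
          congr 2
          rw [ha]; ring
  have b2 : ∀ k ∈ Finset.range K, Real.exp (-a) * ‖(-(a : ℂ)) ^ k / (Nat.factorial k : ℂ) *
          (h ^ k - ∑ n ∈ Finset.range K, (bco n k : ℂ) * (ω * s) ^ n)‖ ≤ C k * Mterm K m k s := by
    intro k _
    have h1 := hC k (ω * s) hx2 hx0
    rw [hx] at h1
    rw [norm_mul, norm_div, norm_pow, norm_neg, Complex.norm_real, Real.norm_of_nonneg ha0,
      Complex.norm_natCast]
    have h2 : a ^ k / (Nat.factorial k : ℝ) ≤ ((m : ℝ) * s ^ 2) ^ k := by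
      calc a ^ k / (Nat.factorial k : ℝ) ≤ a ^ k / 1 := by
            gcongr; exact_mod_cast Nat.one_le_iff_ne_zero.2 (Nat.factorial_ne_zero k)
        _ = a ^ k := div_one _
        _ ≤ _ := by
            gcongr; rw [ha]
            have : 0 ≤ (m : ℝ) * s ^ 2 := by positivity
            linarith
    have h3 : Real.exp (-a) ≤ Real.exp (-((m : ℝ) * s ^ 2 / 4)) := by
      apply Real.exp_le_exp.2
      rw [ha]
      have : 0 ≤ (m : ℝ) * s ^ 2 := by positivity
      linarith
    calc _ ≤ Real.exp (-((m : ℝ) * s ^ 2 / 4)) * (((m : ℝ) * s ^ 2) ^ k * (C k * s ^ K)) := by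
          gcongr
      _ = _ := by unfold Mterm; ring
  have hM : ∀ k, 0 ≤ Mterm K m k s := fun k => by unfold Mterm; positivity
  set S := ∑ k ∈ Finset.range (K + 1), Mterm K m k s with hS
  have hle : ∀ k ∈ Finset.range (K + 1), Mterm K m k s ≤ S := fun k hk =>
    Finset.single_le_sum (f := fun k => Mterm K m k s) (fun i _ => hM i) hk
  calc _ ≤ Real.exp (-a) * (‖Complex.exp (-(a : ℂ) * h) -
        ∑ k ∈ Finset.range K, (-(a : ℂ) * h) ^ k / (Nat.factorial k : ℂ)‖ +
        ∑ k ∈ Finset.range K, ‖(-(a : ℂ)) ^ k / (Nat.factorial k : ℂ) *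
          (h ^ k - ∑ n ∈ Finset.range K, (bco n k : ℂ) * (ω * s) ^ n)‖) := by
        gcongr
        refine (norm_add_le _ _).trans ?_
        gcongr
        exact norm_sum_le _ _
    _ ≤ Mterm K m K s + ∑ k ∈ Finset.range K, C k * Mterm K m k s := by
        rw [mul_add, Finset.mul_sum]
        exact add_le_add b1 (Finset.sum_le_sum b2)
    _ ≤ S + ∑ k ∈ Finset.range K, C k * S := by
        gcongr with k hk
        · exact hle K (by simp)
        · exact hC0 k
        · exact hle k (by simp at hk ⊢; omega)
    _ = _ := by rw [← Finset.sum_mul]; ring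

lemma far_bound (K : ℕ) : ∃ B : ℝ, 0 ≤ B ∧ ∀ (ω : ℂ), ‖ω‖ = 1 → ∀ (m : ℕ) (s : ℝ), 
    1 / 4 < s → ‖Efun K ω m s‖ ≤ B * ∑ k ∈ Finset.range (K + 1), Mterm K m k s := by
  refine ⟨∑ k ∈ Finset.range K, ∑ n ∈ Finset.range K, |bco n k| * 4 ^ K, by positivity,
    fun ω hω m s hs => ?_⟩
  have hs0 : 0 < s := by linarith
  have hM : ∀ k, 0 ≤ Mterm K m k s := fun k => by unfold Mterm; positivity
  set S := ∑ k ∈ Finset.range (K + 1), Mterm K m k s with hS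
  have hle : ∀ k ∈ Finset.range (K + 1), Mterm K m k s ≤ S := fun k hk =>
    Finset.single_le_sum (f := fun k => Mterm K m k s) (fun i _ => hM i) hk
  unfold Efun
  rw [Finset.sum_mul]
  refine (norm_sum_le _ _).trans (Finset.sum_le_sum fun k hk => ?_)
  rw [Finset.sum_mul]
  refine (norm_sum_le _ _).trans (Finset.sum_le_sum fun n hn => ?_)
  have hx : ‖ω * s‖ = s := by
    rw [norm_mul, hω, one_mul, Complex.norm_real, Real.norm_of_nonneg hs0.le]
  set a : ℝ := (m : ℝ) * s ^ 2 / 2 with ha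
  have ha0 : 0 ≤ a := by positivity
  have hac : (m : ℂ) * (s : ℂ) ^ 2 / 2 = (a : ℂ) := by rw [ha]; push_cast; ring
  have hexp : ‖Complex.exp (-(a : ℂ))‖ = Real.exp (-a) := by
    rw [← Complex.ofReal_neg, Complex.norm_exp_ofReal]
  have h2 : a ^ k / (Nat.factorial k : ℝ) ≤ ((m : ℝ) * s ^ 2) ^ k := by
    calc a ^ k / (Nat.factorial k : ℝ) ≤ a ^ k / 1 := by
          gcongr; exact_mod_cast Nat.one_le_iff_ne_zero.2 (Nat.factorial_ne_zero k)
      _ = a ^ k := div_one _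
      _ ≤ _ := by
          gcongr; rw [ha]
          have : 0 ≤ (m : ℝ) * s ^ 2 := by positivity
          linarith
  have h3 : Real.exp (-a) ≤ Real.exp (-((m : ℝ) * s ^ 2 / 4)) := by
    apply Real.exp_le_exp.2
    rw [ha]
    have : 0 ≤ (m : ℝ) * s ^ 2 := by positivity
    linarith
  have h4 : s ^ n ≤ 4 ^ K * s ^ K := by
    have hnK : n ≤ K := (Finset.mem_range.1 hn).le
    calc s ^ n = s ^ n * 1 := (mul_one _).symm
      _ ≤ s ^ n * (4 * s) ^ (K - n) := by
          gcongr
          exact one_le_pow₀ (by linarith)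
      _ = 4 ^ (K - n) * (s ^ n * s ^ (K - n)) := by rw [mul_pow]; ring
      _ = 4 ^ (K - n) * s ^ K := by rw [← pow_add, Nat.add_sub_cancel' hnK]
      _ ≤ _ := by
          gcongr
          · norm_num
          · omega
  unfold Eterm
  rw [hac, norm_mul, hexp, norm_mul, norm_mul, norm_div, norm_pow, norm_pow, norm_neg, hx,
    Complex.norm_real, Complex.norm_real, Real.norm_of_nonneg ha0, Complex.norm_natCast,
    Real.norm_eq_abs]
  calc _ ≤ ((m : ℝ) * s ^ 2) ^ k * |bco n k| * (4 ^ K * s ^ K) *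
        Real.exp (-((m : ℝ) * s ^ 2 / 4)) := by gcongr
    _ = |bco n k| * 4 ^ K * Mterm K m k s := by unfold Mterm; ring
    _ ≤ _ := by
        gcongr
        exact hle k (by simp at hk ⊢; omega)

lemma geom_bound (K : ℕ) {q : ℝ} (hq0 : 0 < q) (hq1 : q < 1) : ∃ C : ℝ, 0 ≤ C ∧ ∀ m : ℕ, 2 ≤ m →
    q ^ (m - 2) ≤ C * (m : ℝ) ^ (-(((K : ℝ) + 1) / 2)) := by
  have ht := tendsto_pow_const_mul_const_pow_of_abs_lt_one (K + 1) (r := q)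
    (by rw [abs_of_pos hq0]; exact hq1)
  obtain ⟨C, hC⟩ := ht.bddAbove_range
  have hC' : ∀ m : ℕ, (m : ℝ) ^ (K + 1) * q ^ m ≤ C := fun m => hC ⟨m, rfl⟩
  have hC0 : 0 ≤ C := le_trans (by positivity) (hC' 0)
  refine ⟨C / q ^ 2, by positivity, fun m hm => ?_⟩
  have hm1 : (1 : ℝ) ≤ m := by exact_mod_cast (by omega : 1 ≤ m)
  have h1 : q ^ m = q ^ (m - 2) * q ^ 2 := by rw [← pow_add]; congr 1; omega
  have h2 : ((m : ℝ) ^ (K + 1))⁻¹ ≤ (m : ℝ) ^ (-(((K : ℝ) + 1) / 2)) := by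
    rw [← Real.rpow_natCast, ← Real.rpow_neg (by linarith)]
    apply Real.rpow_le_rpow_of_exponent_le hm1
    push_cast
    have : (0 : ℝ) ≤ K := by positivity
    linarith
  have h3 := hC' m
  have hmp : (0 : ℝ) < (m : ℝ) ^ (K + 1) := by positivity
  calc q ^ (m - 2) = (((m : ℝ) ^ (K + 1) * q ^ m) / q ^ 2) * ((m : ℝ) ^ (K + 1))⁻¹ := by
        rw [h1]; field_simp
    _ ≤ (C / q ^ 2) * (m : ℝ) ^ (-(((K : ℝ) + 1) / 2)) := by gcongr

lemma pow_integrable (w : ℝ → ℂ)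
    (hw : AEStronglyMeasurable w (volume.restrict (Set.Ioi 0)))
    (hw1 : ∀ s : ℝ, 0 < s → ‖w s‖ ≤ 1)
    (hsqi : IntegrableOn (fun s => ‖w s‖ ^ 2) (Set.Ioi 0)) (m : ℕ) (hm : 2 ≤ m) :
    IntegrableOn (fun s => w s ^ m) (Set.Ioi 0) := by
  refine Integrable.mono' hsqi (hw.pow m) ?_
  refine (ae_restrict_iff' measurableSet_Ioi).2 (Filter.Eventually.of_forall fun s hs => ?_)
  rw [norm_pow]
  exact pow_le_pow_of_le_one (norm_nonneg _) (hw1 s hs) hm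

lemma laplace (w : ℝ → ℂ) (ω : ℂ) (hω : ‖ω‖ = 1)
    (hw : AEStronglyMeasurable w (volume.restrict (Set.Ioi 0)))
    (hw1 : ∀ s : ℝ, 0 < s → ‖w s‖ ≤ 1)
    (hsqi : IntegrableOn (fun s => ‖w s‖ ^ 2) (Set.Ioi 0))
    (hloc : ∀ s : ℝ, 0 < s → s ≤ 1 / 4 →
      w s = Complex.exp (-((s : ℂ) ^ 2 / 2 * (1 + hfun (ω * s)))))
    (q : ℝ) (hq0 : 0 < q) (hq1 : q < 1) (hq : ∀ s : ℝ, 1 / 4 < s → ‖w s‖ ≤ q) (K : ℕ) :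
    ∃ C : ℝ, ∀ m : ℕ, 2 ≤ m →
      ‖(∫ s in Set.Ioi 0, w s ^ m) -
        ∑ n ∈ Finset.range K, ω ^ n * ((Aco n * (m : ℝ) ^ (-(((n : ℝ) + 1) / 2)) : ℝ) : ℂ)‖ ≤
        C * (m : ℝ) ^ (-(((K : ℝ) + 1) / 2)) := by
  obtain ⟨B1, hB1, h1⟩ := local_bound K
  obtain ⟨B2, hB2, h2⟩ := far_bound K
  choose D hD0 hD using Mterm_integral K
  obtain ⟨G, hG0, hG⟩ := geom_bound K hq0 hq1
  set W := ∫ s in Set.Ioi 0, ‖w s‖ ^ 2 with hW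
  have hW0 : 0 ≤ W := integral_nonneg fun s => by positivity
  refine ⟨(B1 + B2) * ∑ k ∈ Finset.range (K + 1), D k + G * W, fun m hm => ?_⟩
  have hm0 : 0 < m := by omega
  have hwm := pow_integrable w hw hw1 hsqi m hm
  rw [← Efun_integral K ω m hm0, ← integral_sub hwm (Efun_integrable K ω m hm0)]
  have hMi : IntegrableOn (fun s => ∑ k ∈ Finset.range (K + 1), Mterm K m k s) (Set.Ioi 0) :=
    integrable_finsetSum _ fun k _ => Mterm_integrable K m k hm0
  have hbi : IntegrableOn (fun s => (B1 + B2) * ∑ k ∈ Finset.range (K + 1), Mterm K m k s +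
      q ^ (m - 2) * ‖w s‖ ^ 2) (Set.Ioi 0) := (hMi.const_mul _).add (hsqi.const_mul _)
  have hpt : ∀ s : ℝ, 0 < s → ‖w s ^ m - Efun K ω m s‖ ≤
      (B1 + B2) * ∑ k ∈ Finset.range (K + 1), Mterm K m k s + q ^ (m - 2) * ‖w s‖ ^ 2 := by
    intro s hs
    have hS : 0 ≤ ∑ k ∈ Finset.range (K + 1), Mterm K m k s :=
      Finset.sum_nonneg fun k _ => by unfold Mterm; positivity
    have hB1S := mul_nonneg hB1 hS
    have hB2S := mul_nonneg hB2 hS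
    have hqw : 0 ≤ q ^ (m - 2) * ‖w s‖ ^ 2 := by positivity
    rcases le_or_gt s (1 / 4) with h | h
    · rw [hloc s hs h]
      have := h1 ω hω m s hs h
      rw [hloc s hs h] at hqw
      linarith
    · have e1 := h2 ω hω m s h
      have e2 : ‖w s ^ m‖ ≤ q ^ (m - 2) * ‖w s‖ ^ 2 := by
        rw [norm_pow]
        calc ‖w s‖ ^ m = ‖w s‖ ^ (m - 2) * ‖w s‖ ^ 2 := by rw [← pow_add]; congr 1; omega
          _ ≤ _ := by gcongr; exact hq s h
      have := norm_sub_le (w s ^ m) (Efun K ω m s)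
      linarith
  calc _ ≤ ∫ s in Set.Ioi 0, ((B1 + B2) * ∑ k ∈ Finset.range (K + 1), Mterm K m k s +
      q ^ (m - 2) * ‖w s‖ ^ 2) := by
        refine norm_integral_le_of_norm_le hbi ?_
        exact (ae_restrict_iff' measurableSet_Ioi).2 (Filter.Eventually.of_forall hpt)
    _ = (B1 + B2) * ∑ k ∈ Finset.range (K + 1), D k * (m : ℝ) ^ (-(((K : ℝ) + 1) / 2)) +
        q ^ (m - 2) * W := by
        rw [integral_add (hMi.const_mul _) (hsqi.const_mul _), integral_const_mul,
          integral_const_mul, integral_finsetSum _ (fun k _ => Mterm_integrable K m k hm0)]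
        simp_rw [hD _ m hm0]
        rw [hW]
    _ ≤ (B1 + B2) * ∑ k ∈ Finset.range (K + 1), D k * (m : ℝ) ^ (-(((K : ℝ) + 1) / 2)) +
        G * (m : ℝ) ^ (-(((K : ℝ) + 1) / 2)) * W := by
        gcongr
        exact hG m hm
    _ = _ := by rw [← Finset.sum_mul]; ring

/-- Half-line Laplace expansion statement. -/
def LapExp (w : ℝ → ℂ) (ω : ℂ) : Prop := ∀ K : ℕ, ∃ C : ℝ, ∀ m : ℕ, 2 ≤ m →
      ‖(∫ s in Set.Ioi 0, w s ^ m) -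
        ∑ n ∈ Finset.range K, ω ^ n * ((Aco n * (m : ℝ) ^ (-(((n : ℝ) + 1) / 2)) : ℝ) : ℂ)‖ ≤
        C * (m : ℝ) ^ (-(((K : ℝ) + 1) / 2))

/-- Right real branch. -/
noncomputable def wp (s : ℝ) : ℂ := (1 + (s : ℂ)) * Complex.exp (-(s : ℂ))

/-- Left real branch. -/
noncomputable def wm (s : ℝ) : ℂ := if s < 1 then (1 - (s : ℂ)) * Complex.exp (s : ℂ) else 0

/-- Imaginary branches. -/
noncomputable def wi (ω : ℂ) (s : ℝ) : ℂ := Complex.exp (ω * s) / (1 + ω * s)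

lemma wp_norm (s : ℝ) (hs : 0 < s) : ‖wp s‖ = (1 + s) * Real.exp (-s) := by
  unfold wp
  rw [norm_mul, ← Complex.ofReal_neg, Complex.norm_exp_ofReal, ← Complex.ofReal_one,
    ← Complex.ofReal_add, Complex.norm_real, Real.norm_of_nonneg (by linarith)]

lemma wm_norm (s : ℝ) (hs : s < 1) : ‖wm s‖ = (1 - s) * Real.exp s := by
  unfold wm
  rw [if_pos hs, norm_mul, Complex.norm_exp_ofReal, ← Complex.ofReal_one,
    ← Complex.ofReal_sub, Complex.norm_real, Real.norm_of_nonneg (by linarith)]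

lemma wp_le_one (s : ℝ) (hs : 0 < s) : ‖wp s‖ ≤ 1 := by
  rw [wp_norm s hs, Real.exp_neg, ← div_eq_mul_inv, div_le_one (Real.exp_pos s)]
  linarith [Real.add_one_le_exp s]

lemma wm_le_one (s : ℝ) : ‖wm s‖ ≤ 1 := by
  rcases lt_or_ge s 1 with h | h
  · rw [wm_norm s h]
    have := Real.add_one_le_exp (-s)
    rw [Real.exp_neg] at this
    have hp := Real.exp_pos s
    calc (1 - s) * Real.exp s ≤ (Real.exp s)⁻¹ * Real.exp s := by gcongr; linarith
      _ = 1 := inv_mul_cancel₀ hp.ne'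
  · unfold wm; rw [if_neg (by linarith)]; simp

lemma wp_cont : Continuous wp := by unfold wp; fun_prop

lemma wm_meas : Measurable wm := by
  unfold wm
  apply Measurable.ite measurableSet_Iio
  · fun_prop
  · fun_prop

lemma wp_int : IntegrableOn (fun s => ‖wp s‖ ^ 2) (Set.Ioi 0) := by
  have h0 := (Real.GammaIntegral_convergent (s := 1) (by norm_num)).const_mul 4
  refine Integrable.mono' h0 (wp_cont.norm.pow 2).aestronglyMeasurable ?_
  refine (ae_restrict_iff' measurableSet_Ioi).2 (Filter.Eventually.of_forall fun s hs => ?_)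
  have hs : 0 < s := hs
  rw [Real.norm_of_nonneg (by positivity), wp_norm s hs, mul_pow, ← Real.exp_nat_mul]
  simp only [sub_self, Real.rpow_zero, mul_one]
  have h1 : s / 2 + 1 ≤ Real.exp (s / 2) := Real.add_one_le_exp _
  have h2 : (1 + s) ^ 2 ≤ 4 * Real.exp s := by
    have : Real.exp s = Real.exp (s / 2) ^ 2 := by rw [← Real.exp_nat_mul]; congr 1; push_cast; ring
    rw [this]
    nlinarith [Real.exp_pos (s / 2)]
  calc (1 + s) ^ 2 * Real.exp ((2 : ℕ) * -s) ≤ 4 * Real.exp s * Real.exp ((2 : ℕ) * -s) := by gcongr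
    _ = _ := by rw [mul_assoc, ← Real.exp_add]; congr 2; push_cast; ring

lemma wm_int : IntegrableOn (fun s => ‖wm s‖ ^ 2) (Set.Ioi 0) := by
  have h0 : Integrable (fun s : ℝ => (Set.Ioo (0 : ℝ) 1).indicator (fun _ => (1 : ℝ)) s)
      (volume.restrict (Set.Ioi 0)) := by
    refine Integrable.restrict ?_
    rw [integrable_indicator_iff measurableSet_Ioo]
    exact integrableOn_const (by simp)
  refine Integrable.mono' h0 (wm_meas.norm.pow_const 2).aestronglyMeasurable ?_
  refine (ae_restrict_iff' measurableSet_Ioi).2 (Filter.Eventually.of_forall fun s hs => ?_)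
  have hs : 0 < s := hs
  rw [Real.norm_of_nonneg (by positivity)]
  by_cases h : s < 1
  · rw [Set.indicator_of_mem (show s ∈ Set.Ioo (0 : ℝ) 1 from ⟨hs, h⟩)]
    exact pow_le_one₀ (norm_nonneg _) (wm_le_one s)
  · rw [Set.indicator_of_notMem (fun h' => h h'.2)]
    unfold wm; rw [if_neg h]; simp

lemma wp_lap : LapExp wp 1 := by
  intro K
  refine laplace wp 1 (by simp) wp_cont.aestronglyMeasurable wp_le_one wp_int ?_
    (5 / 4 * Real.exp (-(1 / 4))) (by positivity) ?_ ?_ K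
  · intro s hs hs4
    have h := one_add_eq_exp (s : ℂ)
      (by rw [Complex.norm_real, Real.norm_of_nonneg hs.le]; linarith)
      (by exact_mod_cast hs.ne')
    unfold wp
    rw [h, ← Complex.exp_add, one_mul]
    congr 1; ring
  · rw [Real.exp_neg, ← div_eq_mul_inv, div_lt_one (Real.exp_pos _)]
    have := Real.add_one_lt_exp (x := 1 / 4) (by norm_num)
    linarith
  · intro s hs
    rw [wp_norm s (by linarith)]
    have := Real.add_one_le_exp (s - 1 / 4)
    have h2 : 1 + s ≤ 5 / 4 * Real.exp (s - 1 / 4) := by nlinarith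
    calc (1 + s) * Real.exp (-s) ≤ 5 / 4 * Real.exp (s - 1 / 4) * Real.exp (-s) := by gcongr
      _ = _ := by rw [mul_assoc, ← Real.exp_add]; congr 2; ring

lemma wm_lap : LapExp wm (-1) := by
  intro K
  refine laplace wm (-1) (by simp) wm_meas.aestronglyMeasurable (fun s _ => wm_le_one s) wm_int ?_
    (3 / 4 * Real.exp (1 / 4)) (by positivity) ?_ ?_ K
  · intro s hs hs4
    have h := one_add_eq_exp (-1 * s : ℂ)
      (by rw [norm_mul, Complex.norm_real, Real.norm_of_nonneg hs.le]; simp; linarith)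
      (by simp [hs.ne'])
    unfold wm
    rw [if_pos (by linarith), show (1 : ℂ) - s = 1 + -1 * s by ring, h, ← Complex.exp_add]
    congr 1; ring
  · have := Real.add_one_lt_exp (x := -(1 / 4)) (by norm_num)
    have h2 : Real.exp (-(1 / 4)) * Real.exp (1 / 4) = 1 := by rw [← Real.exp_add]; simp
    have hp := Real.exp_pos (1 / 4)
    calc 3 / 4 * Real.exp (1 / 4) < Real.exp (-(1 / 4)) * Real.exp (1 / 4) := by gcongr; linarith
      _ = 1 := h2
  · intro s hs
    rcases lt_or_ge s 1 with h | h
    · rw [wm_norm s h]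
      have := Real.add_one_le_exp (-(s - 1 / 4))
      have h2 : 1 - s ≤ 3 / 4 * Real.exp (-(s - 1 / 4)) := by nlinarith
      calc (1 - s) * Real.exp s ≤ 3 / 4 * Real.exp (-(s - 1 / 4)) * Real.exp s := by gcongr
        _ = _ := by rw [mul_assoc, ← Real.exp_add]; congr 2; ring
    · unfold wm; rw [if_neg (by linarith)]
      simp; positivity

lemma wi_den (ω : ℂ) (hω : ω = Complex.I ∨ ω = -Complex.I) (s : ℝ) :
    ‖1 + ω * s‖ = Real.sqrt (1 + s ^ 2) := by
  rw [Complex.norm_eq_sqrt_sq_add_sq]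
  rcases hω with rfl | rfl <;> simp

lemma wi_den_ne (ω : ℂ) (hω : ω = Complex.I ∨ ω = -Complex.I) (s : ℝ) : 1 + ω * s ≠ 0 := by
  rw [← norm_pos_iff, wi_den ω hω]
  positivity

lemma wi_norm (ω : ℂ) (hω : ω = Complex.I ∨ ω = -Complex.I) (s : ℝ) :
    ‖wi ω s‖ = (Real.sqrt (1 + s ^ 2))⁻¹ := by
  unfold wi
  rw [norm_div, wi_den ω hω]
  have : ‖Complex.exp (ω * s)‖ = 1 := by
    rw [Complex.norm_exp]
    rcases hω with rfl | rfl <;> simp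
  rw [this, one_div]

lemma wi_cont (ω : ℂ) (hω : ω = Complex.I ∨ ω = -Complex.I) : Continuous (wi ω) := by
  unfold wi
  refine Continuous.div (by fun_prop) (by fun_prop) (fun s => wi_den_ne ω hω s)

lemma wi_sq_int (ω : ℂ) (hω : ω = Complex.I ∨ ω = -Complex.I) :
    Integrable (fun s => ‖wi ω s‖ ^ 2) := by
  refine integrable_inv_one_add_sq.congr (Filter.Eventually.of_forall fun s => ?_)
  simp only []
  rw [wi_norm ω hω, inv_pow, Real.sq_sqrt (by positivity)]

lemma wi_le_one (ω : ℂ) (hω : ω = Complex.I ∨ ω = -Complex.I) (s : ℝ) : ‖wi ω s‖ ≤ 1 := by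
  rw [wi_norm ω hω]
  apply inv_le_one_of_one_le₀
  rw [Real.one_le_sqrt]
  nlinarith [sq_nonneg s]

lemma wi_lap (ω : ℂ) (hω : ω = Complex.I ∨ ω = -Complex.I) : LapExp (wi ω) ω := by
  intro K
  have hn : ‖ω‖ = 1 := by rcases hω with rfl | rfl <;> simp
  have hsq : ω ^ 2 = -1 := by rcases hω with rfl | rfl <;> simp
  refine laplace (wi ω) ω hn (wi_cont ω hω).aestronglyMeasurable (fun s _ => wi_le_one ω hω s)
    (wi_sq_int ω hω).integrableOn ?_ (Real.sqrt (1 + (1 / 4) ^ 2))⁻¹ (by positivity) ?_ ?_ K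
  · intro s hs hs4
    have hx : ‖ω * s‖ = s := by
      rw [norm_mul, hn, one_mul, Complex.norm_real, Real.norm_of_nonneg hs.le]
    have h := one_add_eq_exp (ω * s) (by rw [hx]; linarith)
      (by rw [← norm_pos_iff, hx]; exact hs)
    unfold wi
    rw [h, ← Complex.exp_sub, mul_pow, hsq]
    congr 1; ring
  · apply inv_lt_one_of_one_lt₀
    apply Real.lt_sqrt_of_sq_lt; norm_num
  · intro s hs
    rw [wi_norm ω hω]
    gcongr

/-- `e^{-z} ∑_{k ≤ n} z^k/k!`. -/
noncomputable def expSum (n : ℕ) (z : ℂ) : ℂ :=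
  Complex.exp (-z) * ∑ k ∈ Finset.range (n + 1), z ^ k / (Nat.factorial k : ℂ)

lemma expSum_zero (n : ℕ) : expSum n 0 = 1 := by
  unfold expSum
  rw [Finset.sum_range_succ']
  simp

lemma expSum_deriv (n : ℕ) (z : ℂ) :
    HasDerivAt (expSum n) (-(Complex.exp (-z) * z ^ n / (Nat.factorial n : ℂ))) z := by
  have hE : HasDerivAt (fun z : ℂ => Complex.exp (-z)) (-Complex.exp (-z)) z := by
    simpa using (hasDerivAt_neg z).cexp
  induction n with
  | zero =>
    unfold expSum
    simpa using hE
  | succ n ih =>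
    have e : expSum (n + 1) = fun z => expSum n z +
        Complex.exp (-z) * (z ^ (n + 1) / (Nat.factorial (n + 1) : ℂ)) := by
      funext z
      unfold expSum
      rw [Finset.sum_range_succ _ (n + 1), mul_add]
    rw [e]
    have h2 : HasDerivAt (fun z : ℂ => z ^ (n + 1) / (Nat.factorial (n + 1) : ℂ))
        (((n + 1 : ℕ) : ℂ) * z ^ n / (Nat.factorial (n + 1) : ℂ)) z := by
      simpa using (hasDerivAt_pow (n + 1) z).div_const (Nat.factorial (n + 1) : ℂ)
    refine HasDerivAt.congr_deriv (ih.add (hE.mul h2)) (Eq.symm ?_)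
    have h3 : (Nat.factorial n : ℂ) ≠ 0 := by exact_mod_cast Nat.factorial_ne_zero n
    have h4 : ((n : ℂ) + 1) ≠ 0 := by exact_mod_cast Nat.succ_ne_zero n
    rw [Nat.factorial_succ]
    push_cast
    field_simp
    ring

lemma expSum_tendsto (n : ℕ) (r : ℂ) (hr : 0 < r.re) :
    Tendsto (fun t : ℝ => expSum n (r * t)) atTop (nhds 0) := by
  unfold expSum
  simp_rw [Finset.mul_sum]
  rw [show (0 : ℂ) = ∑ k ∈ Finset.range (n + 1), 0 by simp]
  refine tendsto_finsetSum _ fun k _ => ?_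
  rw [tendsto_zero_iff_norm_tendsto_zero]
  have h := Real.tendsto_pow_mul_exp_neg_atTop_nhds_zero k
  have h2 : Tendsto (fun t : ℝ => r.re * t) atTop atTop := tendsto_id.const_mul_atTop hr
  have h3 := (h.comp h2).const_mul ((‖r‖ / r.re) ^ k / (Nat.factorial k : ℝ))
  rw [mul_zero] at h3
  refine h3.congr' ?_
  filter_upwards [eventually_ge_atTop 0] with t ht
  rw [norm_mul, norm_div, norm_pow, norm_mul, Complex.norm_exp, Complex.norm_real,
    Real.norm_of_nonneg ht, Complex.norm_natCast]
  simp only [Function.comp_apply, Complex.neg_re, Complex.mul_re, Complex.ofReal_re,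
    Complex.ofReal_im, mul_zero, sub_zero, mul_pow, div_pow]
  field_simp

lemma wp_integral (m : ℕ) (hm : 2 ≤ m) : ∫ s in Set.Ioi 0, wp s ^ m =
    (Complex.exp m * (Nat.factorial m : ℂ) / (m : ℂ) ^ (m + 1)) * expSum m m := by
  have hm0 : (m : ℂ) ≠ 0 := Nat.cast_ne_zero.2 (by omega)
  have hf0 : (Nat.factorial m : ℂ) ≠ 0 := Nat.cast_ne_zero.2 (Nat.factorial_ne_zero m)
  set c := Complex.exp m * (Nat.factorial m : ℂ) / (m : ℂ) ^ (m + 1) with hc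
  have hd : ∀ s ∈ Set.Ici (0 : ℝ), HasDerivAt (fun s : ℝ => -c * expSum m (m * ((1 + s : ℝ) : ℂ)))
      (wp s ^ m) s := by
    intro s _
    have h1 : HasDerivAt (fun s : ℝ => (m : ℂ) * ((1 + s : ℝ) : ℂ)) ((m : ℂ) * ((1 : ℝ) : ℂ)) s :=
      (((hasDerivAt_id s).const_add 1).ofReal_comp).const_mul (m : ℂ)
    have h2 := ((expSum_deriv m (m * ((1 + s : ℝ) : ℂ))).comp s h1).const_mul (-c)
    refine HasDerivAt.congr_deriv h2 (Eq.symm ?_)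
    unfold wp
    rw [hc, mul_pow, ← Complex.exp_nat_mul]
    push_cast
    have : Complex.exp (m * -(s : ℂ)) = Complex.exp m * Complex.exp (-(m * (1 + (s : ℂ)))) := by
      rw [← Complex.exp_add]; congr 1; ring
    rw [this, mul_pow]
    field_simp
    ring
  have hi := pow_integrable wp wp_cont.aestronglyMeasurable wp_le_one wp_int m hm
  have ht : Tendsto (fun s : ℝ => -c * expSum m (m * ((1 + s : ℝ) : ℂ))) atTop (nhds 0) := by
    have := (((expSum_tendsto m (m : ℂ) (by simp; omega)).comp
      (tendsto_atTop_add_const_left atTop (1 : ℝ) tendsto_id)).const_mul (-c))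
    rw [mul_zero] at this
    exact this
  rw [integral_Ioi_of_hasDerivAt_of_tendsto' hd hi ht]
  simp

lemma wm_integral (m : ℕ) (hm : 2 ≤ m) : ∫ s in Set.Ioi 0, wm s ^ m =
    (Complex.exp m * (Nat.factorial m : ℂ) / (m : ℂ) ^ (m + 1)) * (1 - expSum m m) := by
  have hm0 : (m : ℂ) ≠ 0 := Nat.cast_ne_zero.2 (by omega)
  have hf0 : (Nat.factorial m : ℂ) ≠ 0 := Nat.cast_ne_zero.2 (Nat.factorial_ne_zero m)
  set c := Complex.exp m * (Nat.factorial m : ℂ) / (m : ℂ) ^ (m + 1) with hc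
  have hd : ∀ s ∈ Set.uIcc (0 : ℝ) 1, HasDerivAt (fun s : ℝ => c * expSum m (m * ((1 - s : ℝ) : ℂ)))
      (((1 - (s : ℂ)) * Complex.exp (s : ℂ)) ^ m) s := by
    intro s _
    have h1 : HasDerivAt (fun s : ℝ => (m : ℂ) * ((1 - s : ℝ) : ℂ)) ((m : ℂ) * ((-1 : ℝ) : ℂ)) s :=
      (((hasDerivAt_id s).const_sub 1).ofReal_comp).const_mul (m : ℂ)
    have h2 := ((expSum_deriv m (m * ((1 - s : ℝ) : ℂ))).comp s h1).const_mul c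
    refine HasDerivAt.congr_deriv h2 (Eq.symm ?_)
    rw [hc, mul_pow, ← Complex.exp_nat_mul]
    push_cast
    have : Complex.exp (m * (s : ℂ)) = Complex.exp m * Complex.exp (-(m * (1 - (s : ℂ)))) := by
      rw [← Complex.exp_add]; congr 1; ring
    rw [this, mul_pow]
    field_simp
    ring
  have hcont : Continuous (fun s : ℝ => ((1 - (s : ℂ)) * Complex.exp (s : ℂ)) ^ m) := by fun_prop
  have key : ∫ s in Set.Ioi 0, wm s ^ m =
      ∫ s in (0 : ℝ)..1, ((1 - (s : ℂ)) * Complex.exp (s : ℂ)) ^ m := by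
    rw [intervalIntegral.integral_of_le zero_le_one]
    rw [← integral_indicator measurableSet_Ioi, ← integral_indicator measurableSet_Ioc]
    congr 1
    funext s
    by_cases h0 : 0 < s
    · rw [Set.indicator_of_mem (show s ∈ Set.Ioi (0 : ℝ) from h0)]
      by_cases h1 : s < 1
      · rw [Set.indicator_of_mem (show s ∈ Set.Ioc (0 : ℝ) 1 from ⟨h0, h1.le⟩)]
        unfold wm; rw [if_pos h1]
      · unfold wm
        rw [if_neg h1, zero_pow (by omega)]
        by_cases h2 : s = 1
        · subst h2
          simp [show m ≠ 0 by omega]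
        · rw [Set.indicator_of_notMem]
          rintro ⟨_, h3⟩
          exact h1 (lt_of_le_of_ne h3 h2)
    · rw [Set.indicator_of_notMem (show s ∉ Set.Ioi (0 : ℝ) from h0),
        Set.indicator_of_notMem (fun h => h0 h.1)]
  rw [key, intervalIntegral.integral_eq_sub_of_hasDerivAt hd (hcont.intervalIntegrable _ _)]
  simp [expSum_zero]
  ring

lemma gamma_norm_int (n : ℕ) : IntegrableOn (fun t : ℝ => t ^ n * Real.exp (-t)) (Set.Ioi 0) := by
  refine (Real.GammaIntegral_convergent (s := n + 1) (by positivity)).congr_fun ?_ measurableSet_Ioi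
  intro t _
  simp only [add_sub_cancel_right, Real.rpow_natCast]
  ring

lemma gamma_cint (n : ℕ) (r : ℂ) (hr : r.re = 1) :
    IntegrableOn (fun t : ℝ => (t : ℂ) ^ n * Complex.exp (-(r * t))) (Set.Ioi 0) := by
  refine Integrable.mono' (gamma_norm_int n) (Continuous.aestronglyMeasurable (by fun_prop)) ?_
  refine (ae_restrict_iff' measurableSet_Ioi).2 (Filter.Eventually.of_forall fun t ht => ?_)
  have ht : 0 < t := ht
  rw [norm_mul, norm_pow, Complex.norm_real, Real.norm_of_nonneg ht.le, Complex.norm_exp]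
  simp [hr]

lemma gamma_integral (n : ℕ) (r : ℂ) (hr : r.re = 1) :
    ∫ t in Set.Ioi (0 : ℝ), (t : ℂ) ^ n * Complex.exp (-(r * t)) =
      (Nat.factorial n : ℂ) / r ^ (n + 1) := by
  have hr0 : r ≠ 0 := by rintro rfl; simp at hr
  have hf0 : (Nat.factorial n : ℂ) ≠ 0 := Nat.cast_ne_zero.2 (Nat.factorial_ne_zero n)
  set c := (Nat.factorial n : ℂ) / r ^ (n + 1) with hc
  have hd : ∀ t ∈ Set.Ici (0 : ℝ), HasDerivAt (fun t : ℝ => -c * expSum n (r * t))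
      ((t : ℂ) ^ n * Complex.exp (-(r * t))) t := by
    intro t _
    have h1 : HasDerivAt (fun s : ℝ => r * (s : ℂ)) (r * ((1 : ℝ) : ℂ)) t :=
      ((hasDerivAt_id t).ofReal_comp).const_mul r
    have h2 := ((expSum_deriv n (r * t)).comp t h1).const_mul (-c)
    refine HasDerivAt.congr_deriv h2 (Eq.symm ?_)
    rw [hc, mul_pow]
    push_cast
    field_simp
    ring
  have ht : Tendsto (fun t : ℝ => -c * expSum n (r * t)) atTop (nhds 0) := by
    have := (expSum_tendsto n r (by rw [hr]; norm_num)).const_mul (-c)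
    rwa [mul_zero] at this
  rw [integral_Ioi_of_hasDerivAt_of_tendsto' hd (gamma_cint n r hr) ht]
  simp [expSum_zero]

lemma wi_full_int (m : ℕ) (hm : 2 ≤ m) : Integrable (fun y : ℝ => wi Complex.I y ^ m) := by
  refine Integrable.mono' (wi_sq_int Complex.I (Or.inl rfl))
    ((wi_cont Complex.I (Or.inl rfl)).pow m).aestronglyMeasurable ?_
  refine Filter.Eventually.of_forall fun s => ?_
  rw [norm_pow]
  exact pow_le_pow_of_le_one (norm_nonneg _) (wi_le_one _ (Or.inl rfl) s) hm

lemma wi_full (m : ℕ) (hm : 2 ≤ m) : ∫ y : ℝ, wi Complex.I y ^ m =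
    2 * Real.pi * ((m : ℂ) ^ m * Complex.exp (-m) / (Nat.factorial m : ℂ)) := by
  obtain ⟨n, rfl⟩ : ∃ n, m = n + 1 := ⟨m - 1, by omega⟩
  have hn : n ≠ 0 := by omega
  set f : ℝ → ℂ := (Set.Ioi (0 : ℝ)).indicator
    (fun t => (t : ℂ) ^ n * Complex.exp (-((1 : ℂ) * t))) with hf
  have hfi : Integrable f := (integrable_indicator_iff measurableSet_Ioi).2 (gamma_cint n 1 (by simp))
  have hfour : FourierTransform.fourier f = fun ξ : ℝ => (Nat.factorial n : ℂ) /
      (1 + Complex.I * ((2 * Real.pi * ξ : ℝ) : ℂ)) ^ (n + 1) := by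
    funext ξ
    rw [Real.fourier_eq', ← gamma_integral n _ (by simp)]
    rw [← integral_indicator measurableSet_Ioi]
    congr 1
    funext t
    by_cases h0 : t ∈ Set.Ioi (0 : ℝ)
    · rw [hf, Set.indicator_of_mem h0, Set.indicator_of_mem h0, smul_eq_mul, mul_left_comm,
        ← Complex.exp_add]
      congr 2
      simp
      ring
    · rw [hf, Set.indicator_of_notMem h0, Set.indicator_of_notMem h0, smul_zero]
  have hpi : (2 * Real.pi) ≠ 0 := by positivity
  have hFi : Integrable (FourierTransform.fourier f) := by
    rw [hfour]
    have h0 := ((wi_sq_int Complex.I (Or.inl rfl)).comp_mul_left' hpi).const_mul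
      (Nat.factorial n : ℝ)
    refine Integrable.mono' h0 (Continuous.aestronglyMeasurable ?_)
      (Filter.Eventually.of_forall fun ξ => ?_)
    · refine Continuous.div (by fun_prop) (by fun_prop) fun ξ => ?_
      exact pow_ne_zero _ (wi_den_ne _ (Or.inl rfl) _)
    · rw [norm_div, norm_pow, wi_den _ (Or.inl rfl), Complex.norm_natCast, wi_norm _ (Or.inl rfl),
        div_eq_mul_inv, ← inv_pow]
      gcongr ?_ * ?_
      refine pow_le_pow_of_le_one (by positivity) ?_ hm
      have := wi_le_one _ (Or.inl rfl) (2 * Real.pi * ξ)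
      rwa [wi_norm _ (Or.inl rfl)] at this
  have hpos : (0 : ℝ) < ((n + 1 : ℕ) : ℝ) := by positivity
  have hcont : ContinuousAt f ((n + 1 : ℕ) : ℝ) := by
    have : ContinuousAt (fun t : ℝ => (t : ℂ) ^ n * Complex.exp (-((1 : ℂ) * t)))
      ((n + 1 : ℕ) : ℝ) := by fun_prop
    refine this.congr ?_
    filter_upwards [lt_mem_nhds hpos] with t ht
    rw [hf, Set.indicator_of_mem (show t ∈ Set.Ioi (0 : ℝ) from ht)]
  have hinv := hfi.fourierInv_fourier_eq hFi hcont
  rw [Real.fourierInv_eq', hfour, hf,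
    Set.indicator_of_mem (show ((n + 1 : ℕ) : ℝ) ∈ Set.Ioi (0 : ℝ) from hpos)] at hinv
  have e : ∀ ξ : ℝ, Complex.exp (((2 * Real.pi * inner ℝ ξ ((n + 1 : ℕ) : ℝ) : ℝ) : ℂ) * Complex.I) •
      ((Nat.factorial n : ℂ) / (1 + Complex.I * ((2 * Real.pi * ξ : ℝ) : ℂ)) ^ (n + 1)) =
      (Nat.factorial n : ℂ) * (wi Complex.I (2 * Real.pi * ξ) ^ (n + 1)) := by
    intro ξ
    unfold wi
    rw [div_pow, ← Complex.exp_nat_mul, smul_eq_mul]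
    have : (((2 * Real.pi * inner ℝ ξ ((n + 1 : ℕ) : ℝ) : ℝ) : ℂ) * Complex.I) =
      ((n + 1 : ℕ) : ℂ) * (Complex.I * ((2 * Real.pi * ξ : ℝ) : ℂ)) := by
      simp
      ring
    rw [this]
    ring
  simp_rw [e] at hinv
  rw [integral_const_mul, Measure.integral_comp_mul_left (fun y => wi Complex.I y ^ (n + 1)),
    abs_of_pos (by positivity), Complex.real_smul] at hinv
  have hf0 : (Nat.factorial n : ℂ) ≠ 0 := Nat.cast_ne_zero.2 (Nat.factorial_ne_zero n)
  have hn0 : ((n : ℂ) + 1) ≠ 0 := by exact_mod_cast Nat.succ_ne_zero n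
  have hpic : (Real.pi : ℂ) ≠ 0 := by exact_mod_cast Real.pi_ne_zero
  rw [Nat.factorial_succ]
  push_cast at hinv ⊢
  rw [one_mul] at hinv
  field_simp at hinv ⊢
  linear_combination ((n : ℂ) + 1) * hinv

lemma wi_split (m : ℕ) (hm : 2 ≤ m) :
    (∫ s in Set.Ioi 0, wi Complex.I s ^ m) + (∫ s in Set.Ioi 0, wi (-Complex.I) s ^ m) =
    2 * Real.pi * ((m : ℂ) ^ m * Complex.exp (-m) / (Nat.factorial m : ℂ)) := by
  rw [← wi_full m hm]
  have hi := wi_full_int m hm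
  rw [← intervalIntegral.integral_Iic_add_Ioi (b := (0 : ℝ)) hi.integrableOn hi.integrableOn, add_comm]
  congr 1
  have := integral_comp_neg_Ioi (0 : ℝ) (fun y => wi Complex.I y ^ m)
  rw [neg_zero] at this
  rw [← this]
  congr 1
  funext s
  unfold wi
  push_cast
  simp

lemma dfact_eq (j : ℕ) : ((2 * j - 1).doubleFactorial : ℝ) =
    (Nat.factorial (2 * j) : ℝ) / (2 ^ j * (Nat.factorial j : ℝ)) := by
  have hf0 : (Nat.factorial j : ℝ) ≠ 0 := Nat.cast_ne_zero.2 (Nat.factorial_ne_zero j)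
  rcases j with _ | j
  · simp
  · have h1 := Nat.factorial_eq_mul_doubleFactorial (2 * j + 1)
    have h2 := Nat.doubleFactorial_two_mul (j + 1)
    rw [show 2 * j + 1 + 1 = 2 * (j + 1) by ring, h2] at h1
    rw [eq_div_iff (by positivity), h1, show 2 * (j + 1) - 1 = 2 * j + 1 by omega]
    push_cast
    ring

lemma Gamma_add_nat (x : ℝ) (hx : 0 < x) (k : ℕ) :
    Real.Gamma (x + k) = Real.Gamma x * ∏ i ∈ Finset.range k, (x + i) := by
  induction k with
  | zero => simp
  | succ k ih =>
    rw [Finset.prod_range_succ, ← mul_assoc, ← ih]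
    push_cast
    rw [← add_assoc, Real.Gamma_add_one (by positivity)]
    ring

lemma gbinom_eq (x : ℝ) (hx : 0 < x) (k : ℕ) :
    gbinomR (-x) k = (-1) ^ k * Real.Gamma (x + k) / (Real.Gamma x * (Nat.factorial k : ℝ)) := by
  have hG : Real.Gamma x ≠ 0 := (Real.Gamma_pos_of_pos hx).ne'
  have hf0 : (Nat.factorial k : ℝ) ≠ 0 := Nat.cast_ne_zero.2 (Nat.factorial_ne_zero k)
  rw [Gamma_add_nat x hx]
  unfold gbinomR
  have : ∏ i ∈ Finset.range k, (-x - (i : ℝ)) = (-1) ^ k * ∏ i ∈ Finset.range k, (x + i) := by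
    rw [show (-1 : ℝ) ^ k = ∏ i ∈ Finset.range k, (-1) by simp, ← Finset.prod_mul_distrib]
    exact Finset.prod_congr rfl fun i _ => by ring
  rw [this]
  field_simp

lemma stirling_eq (j : ℕ) :
    stirlingCoeff j = 2 / Real.sqrt (2 * Real.pi) * ((-1) ^ j * Aco (2 * j)) := by
  have hx : (0 : ℝ) < (j : ℝ) + 1 / 2 := by positivity
  have hG : Real.Gamma ((j : ℝ) + 1 / 2) ≠ 0 := (Real.Gamma_pos_of_pos hx).ne'
  have e : (((2 * j : ℕ) : ℝ) + 1) / 2 = (j : ℝ) + 1 / 2 := by push_cast; ring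
  have h1 : Aco (2 * j) = 1 / 2 * (2 : ℝ) ^ ((j : ℝ) + 1 / 2) * Real.Gamma ((j : ℝ) + 1 / 2) *
      PowerSeries.coeff (R := ℝ) (2 * j) (Fpow (-((j : ℝ) + 1 / 2))) := by
    rw [Aco_eq (2 * j) (2 * j + 1) (by omega), e]
    unfold Fpow
    rw [PowerSeries.coeff_mk, Finset.mul_sum]
    apply Finset.sum_congr rfl
    intro k _
    have hf0 : (Nat.factorial k : ℝ) ≠ 0 := Nat.cast_ne_zero.2 (Nat.factorial_ne_zero k)
    rw [gbinom_eq _ hx]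
    unfold bco
    field_simp
  rw [h1, Real.Gamma_nat_add_half, dfact_eq, Real.rpow_add (by norm_num), Real.rpow_natCast,
    ← Real.sqrt_eq_rpow, Real.sqrt_mul (by norm_num)]
  unfold stirlingCoeff
  have h2 : Real.sqrt 2 ≠ 0 := by positivity
  have h3 : Real.sqrt Real.pi ≠ 0 := by positivity
  field_simp

lemma Aco_odd (j : ℕ) : Aco (2 * j + 1) = (Nat.factorial j : ℝ) * laplaceCoeff (2 * j + 1) := by
  unfold Aco
  have : (((2 * j + 1 : ℕ) : ℝ) + 1) / 2 = (j : ℝ) + 1 := by push_cast; ring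
  rw [this, Real.Gamma_nat_eq_factorial]

/-- Generating series of the Stirling coefficients. -/
noncomputable def PS : PowerSeries ℝ := PowerSeries.mk stirlingCoeff

/-- Generating series of the odd Laplace coefficients, minus one. -/
noncomputable def QS : PowerSeries ℝ :=
  (PowerSeries.mk fun j => (Nat.factorial j : ℝ) * laplaceCoeff (2 * j + 1)) - 1

lemma C₀_eq (n : ℕ) : PowerSeries.coeff (R := ℝ) n (PS * QS) = C₀ n := by
  unfold QS C₀
  rw [mul_sub, mul_one, map_sub, PowerSeries.coeff_mul,
    Finset.Nat.sum_antidiagonal_eq_sum_range_succ (fun i j => PowerSeries.coeff (R := ℝ) i PS *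
      PowerSeries.coeff (R := ℝ) j
        (PowerSeries.mk fun j => (Nat.factorial j : ℝ) * laplaceCoeff (2 * j + 1))) n]
  simp only [PS, PowerSeries.coeff_mk]
  rw [sub_eq_neg_add]
  congr 1
  apply Finset.sum_congr rfl
  intro k hk
  have : 2 * n - 2 * k + 1 = 2 * (n - k) + 1 := by omega
  rw [this]
  ring

lemma trC_mul_bound (P Q : PowerSeries ℝ) (K : ℕ) : ∃ C : ℝ, 0 ≤ C ∧ ∀ x : ℂ, ‖x‖ ≤ 1 / 2 →
    ‖(trC K P).eval x * (trC K Q).eval x - (trC K (P * Q)).eval x‖ ≤ C * ‖x‖ ^ K := by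
  obtain ⟨C3, hC3, h3⟩ := poly_bound (trC K P * trC K Q - trC K (P * Q)) K (by
    intro d hd
    unfold trC
    rw [← Polynomial.map_mul, ← Polynomial.map_sub, Polynomial.coeff_map, Polynomial.coeff_sub,
      PowerSeries.coeff_trunc, if_pos hd, PowerSeries.coeff_mul, Polynomial.coeff_mul]
    rw [map_eq_zero, sub_eq_zero]
    apply Finset.sum_congr rfl
    intro ij hij
    have := HasAntidiagonal.mem_antidiagonal.1 hij
    rw [PowerSeries.coeff_trunc, PowerSeries.coeff_trunc, if_pos (by omega), if_pos (by omega)])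
  refine ⟨C3, hC3, fun x hx => ?_⟩
  have := h3 x hx
  rwa [Polynomial.eval_sub, Polynomial.eval_mul] at this

lemma sum_even (f : ℕ → ℂ) (N : ℕ) : ∑ n ∈ Finset.range (2 * N),
    (Complex.I ^ n + (-Complex.I) ^ n) * f n = ∑ j ∈ Finset.range N, 2 * (-1) ^ j * f (2 * j) := by
  induction N with
  | zero => simp
  | succ N ih =>
    rw [show 2 * (N + 1) = 2 * N + 1 + 1 by ring, Finset.sum_range_succ, Finset.sum_range_succ, ih,
      Finset.sum_range_succ]
    have a : Complex.I ^ (2 * N) = (-1) ^ N := by rw [pow_mul, Complex.I_sq]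
    have b : (-Complex.I) ^ (2 * N) = (-1) ^ N := by rw [pow_mul, neg_sq, Complex.I_sq]
    rw [pow_succ, pow_succ, a, b]
    ring

lemma sum_odd (f : ℕ → ℂ) (N : ℕ) : ∑ n ∈ Finset.range (2 * N + 1),
    ((1 : ℂ) ^ n - (-1) ^ n) * f n = ∑ j ∈ Finset.range N, 2 * f (2 * j + 1) := by
  induction N with
  | zero => simp
  | succ N ih =>
    rw [show 2 * (N + 1) + 1 = 2 * N + 1 + 1 + 1 by ring, Finset.sum_range_succ,
      Finset.sum_range_succ, ih, Finset.sum_range_succ]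
    have a : (-1 : ℂ) ^ (2 * N + 1) = -1 := by rw [pow_succ, pow_mul]; simp
    have b : (-1 : ℂ) ^ (2 * N + 1 + 1) = 1 := by rw [pow_succ, a]; simp
    rw [a, b, one_pow, one_pow]
    ring

lemma stir_exp (N : ℕ) : ∃ C : ℝ, 0 ≤ C ∧ ∀ m : ℕ, 2 ≤ m →
    ‖((Real.sqrt (2 * Real.pi * m) * ((m : ℝ) ^ m * Real.exp (-m) / (Nat.factorial m : ℝ)) : ℝ) : ℂ) -
      (trC N PS).eval ((m : ℂ)⁻¹)‖ ≤ C * ((m : ℝ)⁻¹) ^ N := by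
  obtain ⟨C1, h1⟩ := wi_lap Complex.I (Or.inl rfl) (2 * N)
  obtain ⟨C2, h2⟩ := wi_lap (-Complex.I) (Or.inr rfl) (2 * N)
  refine ⟨|Real.sqrt (2 * Real.pi) / (2 * Real.pi) * (C1 + C2)|, abs_nonneg _, fun m hm => ?_⟩
  have hm0 : (0 : ℝ) < m := by exact_mod_cast (by omega : 0 < m)
  have hsplit := wi_split m hm
  have b := norm_add_le_of_le (h1 m hm) (h2 m hm)
  rw [sub_add_sub_comm, ← Finset.sum_add_distrib, hsplit] at b
  simp_rw [← add_mul] at b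
  rw [sum_even (fun n => ((Aco n * (m : ℝ) ^ (-(((n : ℝ) + 1) / 2)) : ℝ) : ℂ))] at b
  set c : ℝ := Real.sqrt (2 * Real.pi * m) / (2 * Real.pi) with hc
  have hc0 : 0 ≤ c := by positivity
  have b' := mul_le_mul_of_nonneg_left b hc0
  have hpic : (Real.pi : ℂ) ≠ 0 := by exact_mod_cast Real.pi_ne_zero
  have hcn : ‖(c : ℂ)‖ = c := by rw [Complex.norm_real, Real.norm_of_nonneg hc0]
  nth_rewrite 1 [← hcn] at b'
  rw [← norm_mul, mul_sub] at b'
  have hsq : ∀ j : ℕ, Real.sqrt m * (m : ℝ) ^ (-((((2 * j : ℕ) : ℝ) + 1) / 2)) = ((m : ℝ)⁻¹) ^ j := by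
    intro j
    rw [Real.sqrt_eq_rpow, ← Real.rpow_add hm0, inv_pow, ← Real.rpow_natCast, ← Real.rpow_neg hm0.le]
    congr 1
    push_cast; ring
  have e1 : (c : ℂ) * (2 * Real.pi * ((m : ℂ) ^ m * Complex.exp (-m) / (Nat.factorial m : ℂ))) =
      ((Real.sqrt (2 * Real.pi * m) * ((m : ℝ) ^ m * Real.exp (-m) / (Nat.factorial m : ℝ)) : ℝ) : ℂ) := by
    rw [hc]; push_cast; field_simp
  have e2 : (c : ℂ) * ∑ j ∈ Finset.range N, 2 * (-1) ^ j *
      ((Aco (2 * j) * (m : ℝ) ^ (-((((2 * j : ℕ) : ℝ) + 1) / 2)) : ℝ) : ℂ) =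
      (trC N PS).eval ((m : ℂ)⁻¹) := by
    rw [trC_eval, Finset.mul_sum]
    apply Finset.sum_congr rfl
    intro j _
    unfold PS
    rw [PowerSeries.coeff_mk, stirling_eq]
    have h3 : (2 * Real.pi) = Real.sqrt (2 * Real.pi) * Real.sqrt (2 * Real.pi) :=
      (Real.mul_self_sqrt (by positivity)).symm
    have h4 : Real.sqrt (2 * Real.pi) ≠ 0 := by positivity
    have : c * (2 * (-1) ^ j * (Aco (2 * j) * (m : ℝ) ^ (-((((2 * j : ℕ) : ℝ) + 1) / 2)))) =
        2 / Real.sqrt (2 * Real.pi) * ((-1) ^ j * Aco (2 * j)) * ((m : ℝ)⁻¹) ^ j := by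
      rw [← hsq j, hc, Real.sqrt_mul (by positivity)]
      nth_rewrite 2 [h3]
      field_simp
    have t := congrArg (fun r : ℝ => (r : ℂ)) this
    push_cast at t ⊢
    exact t
  rw [e1, e2] at b'
  refine b'.trans ?_
  calc _ = (Real.sqrt (2 * Real.pi) / (2 * Real.pi) * (C1 + C2)) *
        (Real.sqrt m * (m : ℝ) ^ (-((((2 * N : ℕ) : ℝ) + 1) / 2))) := by
        rw [hc, Real.sqrt_mul (by positivity)]; ring
    _ = _ := by rw [hsq]
    _ ≤ _ := by gcongr; exact le_abs_self _

lemma odd_exp_aux (N : ℕ) : ∃ C : ℝ, 0 ≤ C ∧ ∀ m : ℕ, 2 ≤ m →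
    ‖(m : ℂ) / 2 * ((∫ s in Set.Ioi 0, wp s ^ m) - (∫ s in Set.Ioi 0, wm s ^ m)) -
      ∑ j ∈ Finset.range N, (Aco (2 * j + 1) : ℂ) * ((m : ℂ)⁻¹) ^ j‖ ≤ C * ((m : ℝ)⁻¹) ^ N := by
  obtain ⟨C1, h1⟩ := wp_lap (2 * N + 1)
  obtain ⟨C2, h2⟩ := wm_lap (2 * N + 1)
  refine ⟨|1 / 2 * (C1 + C2)|, abs_nonneg _, fun m hm => ?_⟩
  have hm0 : (0 : ℝ) < m := by exact_mod_cast (by omega : 0 < m)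
  have b := norm_sub_le_of_le (h1 m hm) (h2 m hm)
  rw [sub_sub_sub_comm, ← Finset.sum_sub_distrib] at b
  simp_rw [← sub_mul] at b
  rw [sum_odd (fun n => ((Aco n * (m : ℝ) ^ (-(((n : ℝ) + 1) / 2)) : ℝ) : ℂ))] at b
  have hc0 : 0 ≤ (m : ℝ) / 2 := by positivity
  have b' := mul_le_mul_of_nonneg_left b hc0
  have hcn : ‖(m : ℂ) / 2‖ = (m : ℝ) / 2 := by simp
  nth_rewrite 1 [← hcn] at b'
  rw [← norm_mul, mul_sub] at b'
  have hsq : ∀ j : ℕ, (m : ℝ) * (m : ℝ) ^ (-((((2 * j + 1 : ℕ) : ℝ) + 1) / 2)) = ((m : ℝ)⁻¹) ^ j := by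
    intro j
    nth_rewrite 1 [← Real.rpow_one (m : ℝ)]
    rw [← Real.rpow_add hm0, inv_pow, ← Real.rpow_natCast, ← Real.rpow_neg hm0.le]
    congr 1
    push_cast; ring
  have e2 : (m : ℂ) / 2 * ∑ j ∈ Finset.range N, 2 *
      ((Aco (2 * j + 1) * (m : ℝ) ^ (-((((2 * j + 1 : ℕ) : ℝ) + 1) / 2)) : ℝ) : ℂ) =
      ∑ j ∈ Finset.range N, (Aco (2 * j + 1) : ℂ) * ((m : ℂ)⁻¹) ^ j := by
    rw [Finset.mul_sum]
    apply Finset.sum_congr rfl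
    intro j _
    have := congrArg (fun r : ℝ => (r : ℂ)) (hsq j)
    rw [Complex.ofReal_mul, Complex.ofReal_pow, Complex.ofReal_inv, Complex.ofReal_natCast] at this
    rw [← this, Complex.ofReal_mul]
    ring
  rw [e2] at b'
  refine b'.trans ?_
  calc _ = (1 / 2 * (C1 + C2)) *
        ((m : ℝ) * (m : ℝ) ^ (-((((2 * N + 1 : ℕ) : ℝ) + 1) / 2))) := by ring
    _ = _ := by rw [hsq]
    _ ≤ _ := by gcongr; exact le_abs_self _

lemma QS_eval (N : ℕ) (x : ℂ) : (trC N QS).eval x =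
    ∑ j ∈ Finset.range N, (Aco (2 * j + 1) : ℂ) * x ^ j - if N = 0 then 0 else 1 := by
  rw [trC_eval]
  unfold QS
  induction N with
  | zero => simp
  | succ N ih =>
    rw [Finset.sum_range_succ, Finset.sum_range_succ, ih, map_sub, PowerSeries.coeff_mk,
      PowerSeries.coeff_one, Aco_odd]
    rcases N with _ | N <;> simp <;> ring

lemma odd_exp (N : ℕ) : ∃ C : ℝ, 0 ≤ C ∧ ∀ m : ℕ, 2 ≤ m →
    ‖((m : ℂ) / 2 * ((∫ s in Set.Ioi 0, wp s ^ m) - (∫ s in Set.Ioi 0, wm s ^ m)) - 1) -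
      (trC N QS).eval ((m : ℂ)⁻¹)‖ ≤ C * ((m : ℝ)⁻¹) ^ N := by
  obtain ⟨C, hC, h⟩ := odd_exp_aux N
  refine ⟨C + 1, by positivity, fun m hm => ?_⟩
  have b := h m hm
  rw [QS_eval]
  have hp : 0 ≤ ((m : ℝ)⁻¹) ^ N := by positivity
  rcases N with _ | N
  · simp only [Finset.range_zero, Finset.sum_empty, sub_zero, pow_zero, mul_one, if_true] at b ⊢
    calc _ ≤ _ := norm_sub_le _ _
      _ ≤ C + 1 := by rw [norm_one]; gcongr
  · rw [if_neg (by omega), sub_sub_sub_cancel_right]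
    nlinarith

lemma main_bound (N : ℕ) : ∃ C : ℝ, ∀ m : ℕ, 2 ≤ m →
    ‖((Real.sqrt (2 * Real.pi * m) * ((m : ℝ) ^ m * Real.exp (-m) / (Nat.factorial m : ℝ)) : ℝ) : ℂ) *
      ((m : ℂ) / 2 * ((∫ s in Set.Ioi 0, wp s ^ m) - (∫ s in Set.Ioi 0, wm s ^ m)) - 1) -
      ∑ n ∈ Finset.range N, (C₀ n : ℂ) * ((m : ℂ)⁻¹) ^ n‖ ≤ C * ((m : ℝ)⁻¹) ^ N := by
  obtain ⟨A, hA, h1⟩ := stir_exp N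
  obtain ⟨B, hB, h2⟩ := odd_exp N
  obtain ⟨B0, hB0, h20⟩ := odd_exp 0
  obtain ⟨D, hD, h3⟩ := trC_mul_bound PS QS N
  obtain ⟨E, hE, h4⟩ := poly_bound (trC N PS) 0 (by intro d hd; omega)
  refine ⟨A * B0 + E * B + D, fun m hm => ?_⟩
  have hm0 : (2 : ℝ) ≤ m := by exact_mod_cast hm
  have hx : ‖(m : ℂ)⁻¹‖ = (m : ℝ)⁻¹ := by simp
  have hx2 : ‖(m : ℂ)⁻¹‖ ≤ 1 / 2 := by
    rw [hx, inv_eq_one_div]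
    exact one_div_le_one_div_of_le (by norm_num) hm0
  have a1 := h1 m hm
  have a2 := h2 m hm
  have a20 := h20 m hm
  have a3 := h3 _ hx2
  have a4 := h4 _ hx2
  rw [trC_eval 0] at a20
  rw [trC_eval N (PS * QS)] at a3
  simp only [Finset.range_zero, Finset.sum_empty, sub_zero, pow_zero, mul_one] at a20 a4
  simp only [C₀_eq] at a3
  rw [hx] at a3
  generalize ((Real.sqrt (2 * Real.pi * m) * ((m : ℝ) ^ m * Real.exp (-m) / (Nat.factorial m : ℝ)) : ℝ) : ℂ) = X at *
  generalize (m : ℂ) / 2 * ((∫ s in Set.Ioi 0, wp s ^ m) - (∫ s in Set.Ioi 0, wm s ^ m)) - 1 = Y at *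
  generalize ∑ n ∈ Finset.range N, (C₀ n : ℂ) * ((m : ℂ)⁻¹) ^ n = Z at *
  generalize (trC N PS).eval ((m : ℂ)⁻¹) = P at *
  generalize (trC N QS).eval ((m : ℂ)⁻¹) = Q at *
  have e : X * Y - Z = (X - P) * Y + P * (Y - Q) + (P * Q - Z) := by ring
  rw [e]
  have hp : 0 ≤ ((m : ℝ)⁻¹) ^ N := by positivity
  calc _ ≤ ‖X - P‖ * ‖Y‖ + ‖P‖ * ‖Y - Q‖ + ‖P * Q - Z‖ := by
        refine (norm_add_le _ _).trans (add_le_add_left ((norm_add_le _ _).trans ?_) _)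
        rw [norm_mul, norm_mul]
    _ ≤ A * ((m : ℝ)⁻¹) ^ N * B0 + E * (B * ((m : ℝ)⁻¹) ^ N) + D * ((m : ℝ)⁻¹) ^ N := by
        gcongr
    _ = _ := by ring

lemma main_identity (m : ℕ) (hm : 2 ≤ m) (N : ℕ) :
    ((Real.exp (-(m : ℝ)) * ∑ k ∈ Finset.range m, (m : ℝ) ^ k / (Nat.factorial k : ℝ) -
          (1 / 2 + 1 / Real.sqrt (2 * Real.pi * m) *
            ∑ n ∈ Finset.range N, C₀ n / (m : ℝ) ^ n) : ℝ) : ℂ) =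
    (1 / Real.sqrt (2 * Real.pi * m) : ℝ) *
    (((Real.sqrt (2 * Real.pi * m) * ((m : ℝ) ^ m * Real.exp (-m) / (Nat.factorial m : ℝ)) : ℝ) : ℂ) *
      ((m : ℂ) / 2 * ((∫ s in Set.Ioi 0, wp s ^ m) - (∫ s in Set.Ioi 0, wm s ^ m)) - 1) -
      ∑ n ∈ Finset.range N, (C₀ n : ℂ) * ((m : ℂ)⁻¹) ^ n) := by
  have hm0 : (0 : ℝ) < m := by exact_mod_cast (by omega : 0 < m)
  have hmc : (m : ℂ) ≠ 0 := by exact_mod_cast hm0.ne'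
  have hs : (Real.sqrt (2 * Real.pi * m) : ℂ) ≠ 0 := by
    have : Real.sqrt (2 * Real.pi * m) ≠ 0 := by positivity
    exact_mod_cast this
  have hf0 : (Nat.factorial m : ℂ) ≠ 0 := Nat.cast_ne_zero.2 (Nat.factorial_ne_zero m)
  rw [wp_integral m hm, wm_integral m hm]
  unfold expSum
  rw [Finset.sum_range_succ]
  push_cast
  simp only [inv_pow, div_eq_mul_inv _ ((m : ℂ) ^ _)]
  generalize ∑ n ∈ Finset.range N, (C₀ n : ℂ) * ((m : ℂ) ^ n)⁻¹ = Z at *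
  generalize ∑ n ∈ Finset.range m, (m : ℂ) ^ n / (Nat.factorial n : ℂ) = W at *
  have hex : Complex.exp (-(m : ℂ)) * Complex.exp m = 1 := by
    rw [← Complex.exp_add]; simp
  have hne : Complex.exp (m : ℂ) ≠ 0 := Complex.exp_ne_zero _
  rw [Complex.exp_neg]
  field_simp
  ring

lemma main_isBigO (N : ℕ) : (fun m : ℕ =>
        Real.exp (-(m : ℝ)) * ∑ k ∈ Finset.range m, (m : ℝ) ^ k / (Nat.factorial k : ℝ) -
          (1 / 2 + 1 / Real.sqrt (2 * Real.pi * m) *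
            ∑ n ∈ Finset.range N, C₀ n / (m : ℝ) ^ n))
      =O[atTop] fun m : ℕ => 1 / Real.sqrt (2 * Real.pi * m) * (m : ℝ) ^ (-(N : ℝ)) := by
  obtain ⟨C, hC⟩ := main_bound N
  refine IsBigO.of_bound C ?_
  filter_upwards [eventually_ge_atTop 2] with m hm
  have hm0 : (0 : ℝ) < m := by exact_mod_cast (by omega : 0 < m)
  have h0 : 0 ≤ 1 / Real.sqrt (2 * Real.pi * m) := by positivity
  rw [← Complex.norm_real, main_identity m hm N, norm_mul, Complex.norm_real, norm_mul,
    Real.norm_of_nonneg h0, Real.norm_of_nonneg (by positivity : 0 ≤ (m : ℝ) ^ (-(N : ℝ))),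
    Real.rpow_neg hm0.le, Real.rpow_natCast, ← inv_pow]
  calc _ ≤ 1 / Real.sqrt (2 * Real.pi * m) * (C * ((m : ℝ)⁻¹) ^ N) := by
        gcongr; exact hC m hm
    _ = _ := by ring

lemma bco_succ (n k : ℕ) : bco n (k + 1) = ∑ i ∈ Finset.range (n + 1), bco i k *
    (if n - i = 0 then 0 else 2 * (-1 : ℝ) ^ (n - i) / (((n - i : ℕ) : ℝ) + 2)) := by
  unfold bco
  rw [pow_succ, PowerSeries.coeff_mul, Finset.Nat.sum_antidiagonal_eq_sum_range_succ
    (fun i j => PowerSeries.coeff (R := ℝ) i ((F - 1) ^ k) * PowerSeries.coeff (R := ℝ) j (F - 1)) n]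
  simp only [coeff_Fsub]

lemma bco_zero_right (n : ℕ) : bco n 0 = if n = 0 then 1 else 0 := by
  unfold bco
  rw [pow_zero, PowerSeries.coeff_one]

lemma bco_row1 : bco 0 1 = 0 ∧
    bco 1 1 = -(2 / 3) ∧
    bco 2 1 = 1 / 2 ∧
    bco 3 1 = -(2 / 5) ∧
    bco 4 1 = 1 / 3 ∧
    bco 5 1 = -(2 / 7) ∧
    bco 6 1 = 1 / 4 ∧
    bco 7 1 = -(2 / 9) := by
  refine ⟨?_, ?_, ?_, ?_, ?_, ?_, ?_, ?_⟩ <;> rw [bco_succ] <;>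
    norm_num [Finset.sum_range_succ, bco_zero_right]

lemma bco_row2 : bco 0 2 = 0 ∧
    bco 1 2 = 0 ∧
    bco 2 2 = 4 / 9 ∧
    bco 3 2 = -(2 / 3) ∧
    bco 4 2 = 47 / 60 ∧
    bco 5 2 = -(38 / 45) ∧
    bco 6 2 = 153 / 175 ∧
    bco 7 2 = -(31 / 35) := by
  refine ⟨?_, ?_, ?_, ?_, ?_, ?_, ?_, ?_⟩ <;> rw [bco_succ] <;>
    norm_num [Finset.sum_range_succ, bco_row1]

lemma bco_row3 : bco 0 3 = 0 ∧
    bco 1 3 = 0 ∧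
    bco 2 3 = 0 ∧
    bco 3 3 = -(8 / 27) ∧
    bco 4 3 = 2 / 3 ∧
    bco 5 3 = -(31 / 30) ∧
    bco 6 3 = 493 / 360 ∧
    bco 7 3 = -(1751 / 1050) := by
  refine ⟨?_, ?_, ?_, ?_, ?_, ?_, ?_, ?_⟩ <;> rw [bco_succ] <;>
    norm_num [Finset.sum_range_succ, bco_row2]

lemma bco_row4 : bco 0 4 = 0 ∧
    bco 1 4 = 0 ∧
    bco 2 4 = 0 ∧
    bco 3 4 = 0 ∧
    bco 4 4 = 16 / 81 ∧
    bco 5 4 = -(16 / 27) ∧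
    bco 6 4 = 154 / 135 ∧
    bco 7 4 = -(727 / 405) := by
  refine ⟨?_, ?_, ?_, ?_, ?_, ?_, ?_, ?_⟩ <;> rw [bco_succ] <;>
    norm_num [Finset.sum_range_succ, bco_row3]

lemma bco_row5 : bco 0 5 = 0 ∧
    bco 1 5 = 0 ∧
    bco 2 5 = 0 ∧
    bco 3 5 = 0 ∧
    bco 4 5 = 0 ∧
    bco 5 5 = -(32 / 243) ∧
    bco 6 5 = 40 / 81 ∧
    bco 7 5 = -(92 / 81) := by
  refine ⟨?_, ?_, ?_, ?_, ?_, ?_, ?_, ?_⟩ <;> rw [bco_succ] <;>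
    norm_num [Finset.sum_range_succ, bco_row4]

lemma bco_row6 : bco 0 6 = 0 ∧
    bco 1 6 = 0 ∧
    bco 2 6 = 0 ∧
    bco 3 6 = 0 ∧
    bco 4 6 = 0 ∧
    bco 5 6 = 0 ∧
    bco 6 6 = 64 / 729 ∧
    bco 7 6 = -(32 / 81) := by
  refine ⟨?_, ?_, ?_, ?_, ?_, ?_, ?_, ?_⟩ <;> rw [bco_succ] <;>
    norm_num [Finset.sum_range_succ, bco_row5]

lemma bco_row7 : bco 0 7 = 0 ∧
    bco 1 7 = 0 ∧
    bco 2 7 = 0 ∧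
    bco 3 7 = 0 ∧
    bco 4 7 = 0 ∧
    bco 5 7 = 0 ∧
    bco 6 7 = 0 ∧
    bco 7 7 = -(128 / 2187) := by
  refine ⟨?_, ?_, ?_, ?_, ?_, ?_, ?_, ?_⟩ <;> rw [bco_succ] <;>
    norm_num [Finset.sum_range_succ, bco_row6]

lemma laplace_odd (j : ℕ) : laplaceCoeff (2 * j + 1) = (1 / (Nat.factorial j : ℝ)) *
    ∑ k ∈ Finset.range (2 * j + 2), (1 / 2) * ((-1 : ℝ) ^ k * (2 : ℝ) ^ (j + 1) /
      (Nat.factorial k : ℝ)) * (Nat.factorial (j + k) : ℝ) * bco (2 * j + 1) k := by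
  have hf0 : (Nat.factorial j : ℝ) ≠ 0 := Nat.cast_ne_zero.2 (Nat.factorial_ne_zero j)
  have h := Aco_eq (2 * j + 1) (2 * j + 2) (by omega)
  rw [Aco_odd] at h
  rw [one_div, eq_inv_mul_iff_mul_eq₀ hf0, h]
  apply Finset.sum_congr rfl
  intro k _
  have e : (((2 * j + 1 : ℕ) : ℝ) + 1) / 2 = ((j + 1 : ℕ) : ℝ) := by push_cast; ring
  have e2 : ((j + 1 : ℕ) : ℝ) + (k : ℝ) = ((j + k : ℕ) : ℝ) + 1 := by push_cast; ring
  rw [e, Real.rpow_natCast, e2, Real.Gamma_nat_eq_factorial]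

lemma stirling_eq_sum (n : ℕ) : stirlingCoeff n =
    ((-1 : ℝ) ^ n * (Nat.factorial (2 * n) : ℝ) / (2 ^ n * (Nat.factorial n : ℝ))) *
    ∑ k ∈ Finset.range (2 * n + 1), (∏ i ∈ Finset.range k, (-((n : ℝ) + 1 / 2) - i)) /
      (Nat.factorial k : ℝ) * bco (2 * n) k := by
  unfold stirlingCoeff Fpow
  rw [PowerSeries.coeff_mk]
  rfl

lemma stirling_val0 : stirlingCoeff 0 = 1 := by
  rw [stirling_eq_sum]
  norm_num [Finset.sum_range_succ, Finset.prod_range_succ, Nat.factorial, bco_zero_right,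
    bco_row1, bco_row2, bco_row3, bco_row4, bco_row5, bco_row6, bco_row7]

lemma stirling_val1 : stirlingCoeff 1 = -(1 / 12) := by
  rw [stirling_eq_sum]
  norm_num [Finset.sum_range_succ, Finset.prod_range_succ, Nat.factorial, bco_zero_right,
    bco_row1, bco_row2, bco_row3, bco_row4, bco_row5, bco_row6, bco_row7]

lemma stirling_val2 : stirlingCoeff 2 = 1 / 288 := by
  rw [stirling_eq_sum]
  norm_num [Finset.sum_range_succ, Finset.prod_range_succ, Nat.factorial, bco_zero_right,
    bco_row1, bco_row2, bco_row3, bco_row4, bco_row5, bco_row6, bco_row7]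

lemma stirling_val3 : stirlingCoeff 3 = 139 / 51840 := by
  rw [stirling_eq_sum]
  norm_num [Finset.sum_range_succ, Finset.prod_range_succ, Nat.factorial, bco_zero_right,
    bco_row1, bco_row2, bco_row3, bco_row4, bco_row5, bco_row6, bco_row7]

lemma laplace_val1 : laplaceCoeff 1 = 2 / 3 := by
  have h := laplace_odd 0
  norm_num [Finset.sum_range_succ, Nat.factorial, bco_zero_right, bco_row1, bco_row2, bco_row3, bco_row4, bco_row5, bco_row6, bco_row7] at h
  exact h

lemma laplace_val3 : laplaceCoeff 3 = -(4 / 135) := by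
  have h := laplace_odd 1
  norm_num [Finset.sum_range_succ, Nat.factorial, bco_zero_right, bco_row1, bco_row2, bco_row3, bco_row4, bco_row5, bco_row6, bco_row7] at h
  exact h

lemma laplace_val5 : laplaceCoeff 5 = 4 / 2835 := by
  have h := laplace_odd 2
  norm_num [Finset.sum_range_succ, Nat.factorial, bco_zero_right, bco_row1, bco_row2, bco_row3, bco_row4, bco_row5, bco_row6, bco_row7] at h
  exact h

lemma laplace_val7 : laplaceCoeff 7 = 8 / 25515 := by
  have h := laplace_odd 3
  norm_num [Finset.sum_range_succ, Nat.factorial, bco_zero_right, bco_row1, bco_row2, bco_row3, bco_row4, bco_row5, bco_row6, bco_row7] at h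
  exact h

lemma C₀_vals : C₀ 0 = -(1 / 3) ∧ C₀ 1 = -(1 / 540) ∧ C₀ 2 = 25 / 6048 ∧ C₀ 3 = 101 / 155520 := by
  refine ⟨?_, ?_, ?_, ?_⟩ <;> unfold C₀ <;>
    norm_num [Finset.sum_range_succ, Nat.factorial, stirling_val0, stirling_val1, stirling_val2,
      stirling_val3, laplace_val1, laplace_val3, laplace_val5, laplace_val7]

/-- Asymptotic expansion of `Γ(m,m)/Γ(m) = e^{-m} ∑_{k=0}^{m-1} m^k/k!` as the positive
integer `m → ∞`: for every `N`,
`Γ(m,m)/Γ(m) = 1/2 + (1/√(2πm))(∑_{n=0}^{N-1} C_n(0) m^{-n} + O(m^{-N}))`; in particular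
`C₀(0) = -1/3`, `C₁(0) = -1/540`, `C₂(0) = 25/6048`, `C₃(0) = 101/155520`. -/
theorem incompleteGamma_ratio_expansion (N : ℕ) :
    ((fun m : ℕ =>
        Real.exp (-(m : ℝ)) * ∑ k ∈ Finset.range m, (m : ℝ) ^ k / (Nat.factorial k : ℝ) -
          (1 / 2 + 1 / Real.sqrt (2 * Real.pi * m) *
            ∑ n ∈ Finset.range N, C₀ n / (m : ℝ) ^ n))
      =O[atTop] fun m : ℕ => 1 / Real.sqrt (2 * Real.pi * m) * (m : ℝ) ^ (-(N : ℝ))) ∧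
    C₀ 0 = -(1 / 3) ∧ C₀ 1 = -(1 / 540) ∧ C₀ 2 = 25 / 6048 ∧ C₀ 3 = 101 / 155520 := by
  exact ⟨main_isBigO N, C₀_vals⟩
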